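/- arXiv:0708.2082 — 3 statements merged into one kernel-verified Lean document; each statement's English description precedes it below -/
import Mathlib

section
/- Let f=(m,n,k) be an integer binary quadratic form with discriminant Δ=k²−4mn>0 not a perfect square. The period Γ(f) is palindromic and of odd length if and only if the class of f is supersymmetric, i.e., f is SL(2,ℤ)-equivalent both to its conjugate (m,n,−k) and to its adjoint (−n,−m,k). -/
/-- Iterates of the Gauss map starting from `ξ`. -/
noncomputable def gaussIter (ξ : ℝ) : ℕ → ℝ
  | 0 => ξ
  | n + 1 => 1 / (gaussIter ξ n - (⌊gaussIter ξ n⌋ : ℝ))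

/-- The `n`-th partial quotient of the regular continued fraction expansion of `ξ`. -/
noncomputable def cfTerm (ξ : ℝ) (n : ℕ) : ℤ := ⌊gaussIter ξ n⌋

/-- The continued fraction expansion of `ξ` is periodic with period length `P` from index `N`. -/
def IsEventuallyPeriodicCF (ξ : ℝ) (N P : ℕ) : Prop :=
  1 ≤ P ∧ ∀ j : ℕ, cfTerm ξ (N + j + P) = cfTerm ξ (N + j)

/-- `s` is the (minimal) period of the eventually periodic regular continued fraction
expansion of `ξ`; it is well defined up to cyclic permutation. -/
def IsCFPeriod (s : List ℤ) (ξ : ℝ) : Prop :=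
  s ≠ [] ∧
  (∃ N : ℕ, ∀ j : ℕ, cfTerm ξ (N + j) = s.getD (j % s.length) 0) ∧
  (∀ P : ℕ, 1 ≤ P → (∃ N : ℕ, IsEventuallyPeriodicCF ξ N P) → s.length ≤ P)

/-- The value of the binary quadratic form `f = (m, n, k)`, i.e. `m*x^2 + n*y^2 + k*x*y`. -/
def qval (f : ℤ × ℤ × ℤ) (x y : ℤ) : ℤ := f.1 * x ^ 2 + f.2.1 * y ^ 2 + f.2.2 * x * y

/-- The discriminant `k^2 - 4*m*n` of the form `f = (m, n, k)`. -/
def formDisc (f : ℤ × ℤ × ℤ) : ℤ := f.2.2 ^ 2 - 4 * f.1 * f.2.1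

/-- `SL(2,ℤ)`-equivalence of binary quadratic forms. -/
def SLEquiv (f g : ℤ × ℤ × ℤ) : Prop :=
  ∃ a b c d : ℤ, a * d - b * c = 1 ∧
    ∀ x y : ℤ, qval g x y = qval f (a * x + b * y) (c * x + d * y)

/-- The root with the plus sign of `m*ξ^2 + k*ξ + n = 0`, for `f = (m, n, k)`. -/
noncomputable def xiPlus (f : ℤ × ℤ × ℤ) : ℝ :=
  (-(f.2.2 : ℝ) + Real.sqrt ((formDisc f : ℤ) : ℝ)) / (2 * (f.1 : ℝ))

/-- The root with the minus sign of `m*ξ^2 + k*ξ + n = 0`, for `f = (m, n, k)`. -/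
noncomputable def xiMinus (f : ℤ × ℤ × ℤ) : ℝ :=
  (-(f.2.2 : ℝ) - Real.sqrt ((formDisc f : ℤ) : ℝ)) / (2 * (f.1 : ℝ))

/-- The conjugate `(m, n, -k)` of the form `(m, n, k)`. -/
def conjF (f : ℤ × ℤ × ℤ) : ℤ × ℤ × ℤ := (f.1, f.2.1, -f.2.2)

/-- The adjoint `(-n, -m, k)` of the form `(m, n, k)`. -/
def adjF (f : ℤ × ℤ × ℤ) : ℤ × ℤ × ℤ := (-f.2.1, -f.1, f.2.2)

/-- The antipodal `(-n, -m, -k)` of the form `(m, n, k)`. -/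
def antipF (f : ℤ × ℤ × ℤ) : ℤ × ℤ × ℤ := (-f.2.1, -f.1, -f.2.2)

/-- A form `(m, n, k)` is primitive if `gcd(m, n, k) = 1`. -/
def IsPrimitiveForm (f : ℤ × ℤ × ℤ) : Prop := Int.gcd f.1 (Int.gcd f.2.1 f.2.2) = 1

/-- A finite sequence is palindromic if some cyclic permutation of it equals its reversal. -/
def Palindromic (s : List ℤ) : Prop := ∃ t : List ℤ, List.IsRotated s t ∧ t.reverse = t

/-- A finite sequence is bipalindromic if some cyclic permutation of it is the concatenation
of two palindrome blocks each of odd length. -/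
def Bipalindromic (s : List ℤ) : Prop :=
  ∃ u v : List ℤ, List.IsRotated s (u ++ v) ∧ Odd u.length ∧ Odd v.length ∧
    u.reverse = u ∧ v.reverse = v


namespace St5

/-- Uniqueness of infinite continued fractions. -/
lemma cf_unique_aux (u v : ℕ → ℝ) (a : ℕ → ℤ) (hu : ∀ i, u i = a i + 1 / u (i+1))
    (hv : ∀ i, v i = a i + 1 / v (i+1)) (hu1 : ∀ i, 1 < u i) (hv1 : ∀ i, 1 < v i) :
    ∀ n i, |u i - v i| ≤ (1/4 : ℝ)^n := by
  have ha : ∀ i, (1:ℝ) ≤ a i := by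
    intro i
    have h1 : 1 / u (i+1) < 1 := by
      rw [div_lt_one (by linarith [hu1 (i+1)])]; exact hu1 _
    have h2 : (0:ℝ) < a i := by linarith [hu i, hu1 i]
    exact_mod_cast h2
  have step : ∀ i, |u i - v i| = |u (i+1) - v (i+1)| / (u (i+1) * v (i+1)) := by
    intro i
    have p := hu1 (i+1)
    have q := hv1 (i+1)
    have : u i - v i = -(u (i+1) - v (i+1)) / (u (i+1) * v (i+1)) := by
      rw [hu i, hv i]
      field_simp
      ring
    rw [this, abs_div, abs_neg, abs_of_pos (a := u (i+1) * v (i+1)) (by positivity)]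
  have two : ∀ w : ℕ → ℝ, (∀ i, w i = a i + 1 / w (i+1)) → (∀ i, 1 < w i) → ∀ i,
      2 ≤ w i * w (i+1) := by
    intro w hw hw1 i
    have p := hw1 (i+1)
    have : w i * w (i+1) = a i * w (i+1) + 1 := by
      rw [hw i]; field_simp
    nlinarith [ha i]
  intro n
  induction n with
  | zero =>
    intro i
    have h1 : 1 / u (i+1) < 1 := by
      rw [div_lt_one (by linarith [hu1 (i+1)])]; exact hu1 _
    have h2 : 1 / v (i+1) < 1 := by
      rw [div_lt_one (by linarith [hv1 (i+1)])]; exact hv1 _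
    have h3 : 0 < 1 / u (i+1) := by have := hu1 (i+1); positivity
    have h4 : 0 < 1 / v (i+1) := by have := hv1 (i+1); positivity
    rw [abs_le, hu i, hv i]
    rw [pow_zero]
    constructor <;> linarith
  | succ n ih =>
    intro i
    rw [step i, step (i+1), div_div]
    have p := two u hu hu1 (i+1)
    have q := two v hv hv1 (i+1)
    have h4 : 4 ≤ u (i+1+1) * v (i+1+1) * (u (i+1) * v (i+1)) := by nlinarith
    have hh := ih (i+1+1)
    rw [div_le_iff₀ (by linarith), pow_succ]
    have : 0 ≤ (1/4:ℝ)^n := by positivity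
    nlinarith

lemma cf_unique (u v : ℕ → ℝ) (a : ℕ → ℤ) (hu : ∀ i, u i = a i + 1 / u (i+1))
    (hv : ∀ i, v i = a i + 1 / v (i+1)) (hu1 : ∀ i, 1 < u i) (hv1 : ∀ i, 1 < v i) :
    u 0 = v 0 := by
  have h := cf_unique_aux u v a hu hv hu1 hv1
  have h0 : |u 0 - v 0| ≤ 0 :=
    ge_of_tendsto' (tendsto_pow_atTop_nhds_zero_of_lt_one (by norm_num) (by norm_num))
      (fun n => h n 0)
  have := abs_nonpos_iff.mp h0
  linarith

lemma gi_add (x : ℝ) (i j : ℕ) : gaussIter x (i + j) = gaussIter (gaussIter x i) j := by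
  induction j with
  | zero => rfl
  | succ j ih => rw [← add_assoc, gaussIter, ih, gaussIter]

lemma gi_one (x : ℝ) : gaussIter x 1 = 1 / (x - ⌊x⌋) := rfl

lemma gi_one_eq (x w : ℝ) (a : ℤ) (h : x = a + 1 / w) (hw : 1 < w) : gaussIter x 1 = w := by
  have h1 : 1 / w < 1 := by rw [div_lt_one (by linarith)]; exact hw
  have h0 : 0 < 1 / w := by positivity
  have : ⌊x⌋ = a := by rw [Int.floor_eq_iff]; constructor <;> linarith
  rw [gi_one, this, h]
  simp

lemma floor_eq (x w : ℝ) (a : ℤ) (h : x = a + 1 / w) (hw : 1 < w) : ⌊x⌋ = a := by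
  have h1 : 1 / w < 1 := by rw [div_lt_one (by linarith)]; exact hw
  have h0 : 0 < 1 / w := by positivity
  rw [Int.floor_eq_iff]; constructor <;> linarith

lemma gi_seq (u : ℕ → ℝ) (a : ℕ → ℤ) (hu : ∀ i, u i = a i + 1 / u (i+1)) (hu1 : ∀ i, 1 < u i) 
    (j : ℕ) : gaussIter (u 0) j = u j := by
  induction j with
  | zero => rfl
  | succ j ih => rw [gi_add, ih]; exact gi_one_eq _ _ _ (hu j) (hu1 _)

lemma frac_pos {x : ℝ} (hx : Irrational x) : 0 < x - ⌊x⌋ := by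
  rcases (sub_nonneg.mpr (Int.floor_le x)).lt_or_eq with h | h
  · exact h
  · exact absurd (by linarith : x = (⌊x⌋ : ℝ)) (hx.ne_int _)

lemma irr_inv {x : ℝ} (hx : Irrational x) : Irrational (1 / x) := by
  rw [one_div]; exact irrational_inv_iff.mpr hx

lemma gi_irr {x : ℝ} (hx : Irrational x) (n : ℕ) : Irrational (gaussIter x n) := by
  induction n with
  | zero => exact hx
  | succ n ih => exact irr_inv (ih.sub_intCast _)

lemma gi_gt_one {x : ℝ} (hx : Irrational x) (n : ℕ) : 1 < gaussIter x (n+1) := by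
  have h := gi_irr hx n
  rw [gaussIter, lt_div_iff₀ (frac_pos h)]
  linarith [Int.lt_floor_add_one (gaussIter x n)]

lemma gi_rec {x : ℝ} (hx : Irrational x) (n : ℕ) :
    gaussIter x n = cfTerm x n + 1 / gaussIter x (n+1) := by
  rw [gaussIter, cfTerm]; simp

/-- Tail equivalence with parity. -/
def TR (e : ℕ) (x y : ℝ) : Prop := ∃ i j, gaussIter x i = gaussIter y j ∧ Even (i + j + e)

lemma TR.symm {e : ℕ} {x y : ℝ} (h : TR e x y) : TR e y x := by
  obtain ⟨i, j, h, he⟩ := h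
  exact ⟨j, i, h.symm, by rwa [add_comm j i]⟩

lemma TR.trans {e f : ℕ} {x y z : ℝ} (h : TR e x y) (h' : TR f y z) : TR (e + f) x z := by
  obtain ⟨i, j, h, he⟩ := h
  obtain ⟨k, l, h', hf⟩ := h'
  refine ⟨i + k, l + j, ?_, by grind⟩
  rw [gi_add, h, ← gi_add, gi_add z, ← h', ← gi_add, add_comm]

lemma TR.par {e f : ℕ} {x y : ℝ} (h : TR e x y) (hef : Even (e + f)) : TR f x y := by
  obtain ⟨i, j, h, he⟩ := h
  exact ⟨i, j, h, by grind⟩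

lemma TR_add (x : ℝ) (q : ℤ) : TR 0 (x + q) x := by
  refine ⟨1, 1, ?_, by decide⟩
  simp [gi_one]

lemma TR_neg {x : ℝ} (hx : Irrational x) : TR 1 (-x) x := by
  have e0 := gi_rec hx 0
  have e1 := gi_rec hx 1
  have e2 := gi_rec hx 2
  have g1 := gi_gt_one hx 0
  have g2 := gi_gt_one hx 1
  have g3 := gi_gt_one hx 2
  have i1 := gi_irr hx 1
  simp only [gaussIter.eq_1, zero_add, Nat.reduceAdd] at e0 e1 e2 g1 g2 g3
  generalize h3 : gaussIter x 3 = x3 at *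
  generalize h2 : gaussIter x 2 = x2 at *
  generalize h1 : gaussIter x 1 = x1 at *
  generalize cfTerm x 0 = a0 at *
  generalize cfTerm x 1 = a1 at *
  generalize cfTerm x 2 = a2 at *
  have hx1 : x1 - 1 ≠ 0 := by linarith
  have s1 : gaussIter (-x) 1 = 1 + 1 / (x1 - 1) := by
    apply gi_one_eq (a := -a0 - 1)
    · have : x1 ≠ 0 := by linarith
      rw [e0]; push_cast
      have : 1 + 1 / (x1 - 1) = x1 / (x1 - 1) := by field_simp; ring
      rw [this]; field_simp; ring
    · have : 0 < 1 / (x1 - 1) := one_div_pos.mpr (by linarith)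
      linarith
  rcases lt_or_ge x1 2 with h | h
  · refine ⟨2, 3, ?_, by decide⟩
    have ha1 : a1 = 1 := by
      have := floor_eq _ _ _ e1 g2
      rw [← this, Int.floor_eq_iff]; norm_num; constructor <;> linarith
    have : 1 / (x1 - 1) = x2 := by rw [e1, ha1]; simp
    rw [this] at s1
    rw [gi_add _ 1 1, s1, h3]
    exact gi_one_eq _ _ (1 + a2) (by rw [e2]; push_cast; ring) g3
  · refine ⟨3, 2, ?_, by decide⟩
    have h' : 2 < x1 := lt_of_le_of_ne h (by simpa using (i1.ne_nat 2).symm)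
    have s2 : gaussIter (-x) 2 = x1 - 1 := by
      rw [gi_add _ 1 1, s1]
      exact gi_one_eq _ _ 1 (by simp) (by linarith)
    rw [gi_add _ 2 1, s2, h2]
    exact gi_one_eq _ _ (a1 - 1) (by rw [e1]; push_cast; ring) g2

lemma TR_inv_pos {x : ℝ} (hx : Irrational x) (h : 0 < x) : TR 1 (1 / x) x := by
  rcases lt_or_ge 1 x with h1 | h1
  · exact ⟨1, 0, gi_one_eq (1 / x) x 0 (by simp) h1, by decide⟩
  · have h1 : x < 1 := lt_of_le_of_ne h1 (by simpa using (hx.ne_nat 1))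
    refine ⟨0, 1, (gi_one_eq x (1 / x) 0 (by simp) ?_).symm, by decide⟩
    rwa [lt_div_iff₀ h, one_mul]

lemma TR_inv {x : ℝ} (hx : Irrational x) : TR 1 (1 / x) x := by
  rcases lt_trichotomy x 0 with h | h | h
  · have h1 := TR_inv_pos hx.neg (by linarith)
    have h2 := TR_neg (irr_inv hx)
    have h3 := TR_neg hx
    have : 1 / (-x) = -(1 / x) := by ring
    rw [this] at h1
    exact ((h2.symm.trans h1).trans h3).par (by decide)
  · exact absurd h hx.ne_zero
  · exact TR_inv_pos hx h

/-- Serret's theorem with parity. -/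
lemma serret {x : ℝ} (hx : Irrational x) : ∀ (N e : ℕ) (a b c d : ℤ) (y : ℝ), c.natAbs = N → 
    a * d - b * c = (-1)^e → y * (c * x + d) = a * x + b → Irrational y ∧ TR e y x := by
  intro N
  induction N using Nat.strong_induction_on with
  | _ N ih =>
  intro e a b c d y hc hdet hy
  by_cases c0 : c = 0
  · subst c0
    have had : a * d = (-1)^e := by simpa using hdet
    have hu : IsUnit d := by
      apply isUnit_of_mul_isUnit_right (x := a); rw [had]; exact (isUnit_neg_one).pow e
    have hu' : IsUnit a := by
      apply isUnit_of_mul_isUnit_left (y := d); rw [had]; exact (isUnit_neg_one).pow e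
    have kp : ∀ q : ℤ, Even e → y = x + q → Irrational y ∧ TR e y x := by
      rintro q he rfl
      exact ⟨hx.add_intCast q, (TR_add x q).par (by simpa using he)⟩
    have kn : ∀ q : ℤ, Odd e → y = -x + q → Irrational y ∧ TR e y x := by
      rintro q he rfl
      exact ⟨hx.neg.add_intCast q, ((TR_add (-x) q).trans (TR_neg hx)).par (by grind)⟩
    rcases Int.isUnit_iff.mp hu with rfl | rfl <;> rcases Int.isUnit_iff.mp hu' with rfl | rfl
    · exact kp b (neg_one_pow_eq_one_iff_even (R := ℤ) (by norm_num) |>.mp (by rw [← had]; norm_num))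
        (by push_cast at hy; linarith)
    · exact kn b (neg_one_pow_eq_neg_one_iff_odd (R := ℤ) (by norm_num) |>.mp (by rw [← had]; norm_num))
        (by push_cast at hy; linarith)
    · exact kn (-b) (neg_one_pow_eq_neg_one_iff_odd (R := ℤ) (by norm_num) |>.mp (by rw [← had]; norm_num))
        (by push_cast at hy ⊢; linarith)
    · exact kp (-b) (neg_one_pow_eq_one_iff_even (R := ℤ) (by norm_num) |>.mp (by rw [← had]; norm_num))
        (by push_cast at hy ⊢; linarith)
  · set q := a / c
    have hr : (a - q * c).natAbs < N := by
      have h1 := Int.emod_nonneg a c0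
      have h2 := Int.emod_lt_abs a c0
      have h3 := Int.emod_add_mul_ediv a c
      have h4 : a - q * c = a % c := by linarith [mul_comm q c]
      rw [h4, ← hc, ← Int.ofNat_lt, Int.natCast_natAbs, Int.natCast_natAbs, abs_of_nonneg h1]
      exact h2
    have hne : (c * x + d : ℝ) ≠ 0 := by
      exact ((hx.intCast_mul c0).add_intCast d).ne_zero
    have hyq : (y - q) * (c * x + d) = ((a - q * c : ℤ) : ℝ) * x + ((b - q * d : ℤ) : ℝ) := by
      push_cast; linear_combination hy
    have hyq0 : y - q ≠ 0 := by
      intro h0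
      rw [h0, zero_mul] at hyq
      by_cases hz : a - q * c = 0
      · rw [hz] at hyq
        have h5 : b - q * d = 0 := by
          have : ((b - q * d : ℤ) : ℝ) = 0 := by simpa using hyq.symm
          exact_mod_cast this
        have : a * d - b * c = 0 := by linear_combination d * hz - c * h5
        rw [hdet] at this
        exact pow_ne_zero e (by norm_num) this
      · exact ((hx.intCast_mul hz).add_intCast (b - q * d)).ne_zero hyq.symm
    obtain ⟨i1, t1⟩ := ih _ hr (e + 1) c d (a - q * c) (b - q * d) (1 / (y - q)) rfl
      (by rw [pow_succ, ← hdet]; ring) (by rw [← hyq]; field_simp)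
    have i2 : Irrational (y - q) := by
      have := irr_inv i1
      rwa [one_div_one_div] at this
    have i3 : Irrational y := by
      have := i2.add_intCast q
      rwa [sub_add_cancel] at this
    refine ⟨i3, ?_⟩
    have t2 := TR_add (y - q) q
    rw [sub_add_cancel] at t2
    exact ((t2.trans (TR_inv i2).symm).trans t1).par ⟨e + 1, by ring⟩

end St5

namespace St5

/-- Simultaneous Moebius equivalence of pairs. -/
def Mob (e : ℕ) (x x' y y' : ℝ) : Prop := ∃ a b c d : ℤ, a * d - b * c = (-1)^e ∧
  x * (c * y + d) = a * y + b ∧ x' * (c * y' + d) = a * y' + b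

lemma Mob.symm {e : ℕ} {x x' y y' : ℝ} (h : Mob e x x' y y') : Mob e y y' x x' := by
  obtain ⟨a, b, c, d, h, h1, h2⟩ := h
  refine ⟨d, -b, -c, a, by rw [← h]; ring, ?_, ?_⟩ <;> push_cast
  · linear_combination -h1
  · linear_combination -h2

lemma Mob.trans {e f : ℕ} {x x' y y' z z' : ℝ} (h : Mob e x x' y y') (h' : Mob f y y' z z') :
    Mob (e + f) x x' z z' := by
  obtain ⟨a, b, c, d, h, h1, h2⟩ := h
  obtain ⟨p, q, r, s, k, k1, k2⟩ := h'
  refine ⟨a * p + b * r, a * q + b * s, c * p + d * r, c * q + d * s, ?_, ?_, ?_⟩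
  · rw [pow_add, ← h, ← k]; ring
  · push_cast; linear_combination (r * z + s) * h1 - (c * x - a) * k1
  · push_cast; linear_combination (r * z' + s) * h2 - (c * x' - a) * k2

lemma Mob.swap {e : ℕ} {x x' y y' : ℝ} (h : Mob e x x' y y') : Mob e x' x y' y := by
  obtain ⟨a, b, c, d, h, h1, h2⟩ := h
  exact ⟨a, b, c, d, h, h2, h1⟩

lemma Mob.TR {e : ℕ} {x x' y y' : ℝ} (h : Mob e x x' y y') (hy : Irrational y) : TR e x y := by
  obtain ⟨a, b, c, d, h, h1, h2⟩ := h
  exact (serret hy _ e a b c d x rfl h h1).2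

/-- integer linear independence of `1, x`. -/
lemma lin_zero {x : ℝ} (hx : Irrational x) {a b : ℤ} (h : (a : ℝ) * x + b = 0) : a = 0 ∧ b = 0 := by
  have ha : a = 0 := by
    by_contra h0
    exact ((hx.intCast_mul h0).add_intCast b).ne_zero h
  subst ha
  exact ⟨rfl, by simpa using h⟩

/-- From fixing the root, with determinant `D`, to form invariance. -/
lemma form_of_fix {m n k a b c d : ℤ} (hm : m ≠ 0) {x : ℝ} (hx : Irrational x)
    (hr : m * x ^ 2 + k * x + n = 0) (h : x * (c * x + d) = a * x + b) (X Y : ℤ) :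
    qval (m, n, k) (a * X + b * Y) (c * X + d * Y) = (a * d - b * c) * qval (m, n, k) X Y := by
  have h1 : ((m * (d - a) - c * k : ℤ) : ℝ) * x + ((-c * n - m * b : ℤ) : ℝ) = 0 := by
    push_cast; linear_combination m * h - c * hr
  obtain ⟨e1, e2⟩ := lin_zero hx h1
  have e3 : k * b + n * (d - a) = 0 := by
    have : m * (k * b + n * (d - a)) = 0 := by linear_combination n * e1 - k * e2
    exact (mul_eq_zero.mp this).resolve_left hm
  simp only [qval]
  linear_combination X^2 * (-a * e1 - c * e2) + X * Y * (-2 * d * e2 - 2 * b * e1)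
    + Y^2 * (-b * e2 + d * e3)

lemma form_of_swap {m n k a b c d : ℤ} {x x' : ℝ} (hx : Irrational x)
    (hs : m * (x + x') = -k) (hp : m * (x * x') = n) (hm : m ≠ 0)
    (h : x' * (c * x + d) = a * x + b) (X Y : ℤ) :
    qval (m, n, k) (a * X + b * Y) (c * X + d * Y) = -(a * d - b * c) * qval (m, n, k) X Y := by
  have h1 : ((m * (a + d) : ℤ) : ℝ) * x + ((m * b - c * n + d * k : ℤ) : ℝ) = 0 := by
    push_cast; linear_combination -m * h + d * hs + c * hp
  obtain ⟨e1, e2⟩ := lin_zero hx h1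
  have e3 : d = -a := by
    have := (mul_eq_zero.mp e1).resolve_left hm
    linarith
  subst e3
  simp only [qval]
  linear_combination X^2 * (-c * e2) + X * Y * (2 * a * e2) + Y^2 * (b * e2)

lemma fix_of_form {m n k a b c d : ℤ} (hm : m ≠ 0) {x : ℝ}
    (hr : m * x ^ 2 + k * x + n = 0) (hD : a * d - b * c = -1)
    (h : ∀ X Y, qval (m, n, k) (a * X + b * Y) (c * X + d * Y) = - qval (m, n, k) X Y) :
    x * (c * x + d) = a * x + b := by
  have h1 := h 1 0
  have h2 := h 0 1
  have h3 := h 1 1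
  simp only [qval] at h1 h2 h3
  ring_nf at h1 h2 h3
  have e1 : m * (d - a) = c * k := by
    have : 2 * (m * (d - a)) = 2 * (c * k) := by
      linear_combination 2 * d * h1 - c * (h3 - h1 - h2) - (2 * m * a + k * c) * hD
    linarith
  have e2 : -c * n = m * b := by
    have : 2 * (-c * n) = 2 * (m * b) := by
      linear_combination -2 * b * h1 + a * (h3 - h1 - h2) - (a * k + 2 * n * c) * hD
    linarith
  have e1' : (m * (d - a) : ℝ) = c * k := by exact_mod_cast e1
  have e2' : (-c * n : ℝ) = m * b := by exact_mod_cast e2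
  have : (m : ℝ) ≠ 0 := by exact_mod_cast hm
  apply mul_left_cancel₀ this
  linear_combination c * hr + x * e1' + e2'

lemma swap_of_form {m n k a b c d : ℤ} (hm : m ≠ 0) {x x' : ℝ}
    (hs : m * (x + x') = -k) (hp : m * (x * x') = n) (hD : a * d - b * c = 1)
    (h : ∀ X Y, qval (m, n, k) (a * X + b * Y) (c * X + d * Y) = - qval (m, n, k) X Y) :
    x' * (c * x + d) = a * x + b := by
  have h1 := h 1 0
  have h2 := h 0 1
  have h3 := h 1 1
  simp only [qval] at h1 h2 h3
  ring_nf at h1 h2 h3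
  have e1 : m * (a + d) = 0 := by
    have : 2 * (m * (a + d)) = 2 * (0) := by
      linear_combination 2 * d * h1 - c * (h3 - h1 - h2) - (2 * m * a + k * c) * hD
    linarith
  have e2 : m * b - c * n + d * k = 0 := by
    have hd := (mul_eq_zero.mp e1).resolve_left hm
    have : 2 * (m * b - c * n + d * k) = 0 := by
      linear_combination 2 * b * h1 - a * (h3 - h1 - h2) + (a * k + 2 * n * c) * hD + 2 * k * hd
    linarith
  have e1' : (m * (a + d) : ℝ) = 0 := by exact_mod_cast e1
  have e2' : (m * b - c * n + d * k : ℝ) = 0 := by exact_mod_cast e2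
  have : (m : ℝ) ≠ 0 := by exact_mod_cast hm
  apply mul_left_cancel₀ this
  linear_combination d * hs + c * hp - x * e1' - e2'


lemma SLEquiv_adj_iff (m n k : ℤ) : SLEquiv (m, n, k) (adjF (m, n, k)) ↔ ∃ a b c d : ℤ,
    a * d - b * c = 1 ∧ ∀ X Y, qval (m, n, k) (a * X + b * Y) (c * X + d * Y) =
      - qval (m, n, k) X Y := by
  constructor
  · rintro ⟨a, b, c, d, h, hq⟩
    refine ⟨b, -a, d, -c, by linarith, fun X Y => ?_⟩
    have := hq (-Y) X
    rw [show b * X + -a * Y = a * (-Y) + b * X by ring,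
      show d * X + -c * Y = c * (-Y) + d * X by ring, ← this]
    simp only [qval, adjF]; ring
  · rintro ⟨a, b, c, d, h, hq⟩
    refine ⟨-b, a, -d, c, by linarith, fun X Y => ?_⟩
    have := hq Y (-X)
    rw [show -b * X + a * Y = a * Y + b * (-X) by ring,
      show -d * X + c * Y = c * Y + d * (-X) by ring, this]
    simp only [qval, adjF]; ring

lemma SLEquiv_conj_iff (m n k : ℤ) : SLEquiv (m, n, k) (conjF (m, n, k)) ↔ ∃ a b c d : ℤ,
    a * d - b * c = -1 ∧ ∀ X Y, qval (m, n, k) (a * X + b * Y) (c * X + d * Y) =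
      qval (m, n, k) X Y := by
  constructor
  · rintro ⟨a, b, c, d, h, hq⟩
    refine ⟨a, -b, c, -d, by linarith, fun X Y => ?_⟩
    have := hq X (-Y)
    rw [show a * X + -b * Y = a * X + b * (-Y) by ring,
      show c * X + -d * Y = c * X + d * (-Y) by ring, ← this]
    simp only [qval, conjF]; ring
  · rintro ⟨a, b, c, d, h, hq⟩
    refine ⟨a, -b, c, -d, by linarith, fun X Y => ?_⟩
    have := hq X (-Y)
    rw [show a * X + -b * Y = a * X + b * (-Y) by ring,
      show c * X + -d * Y = c * X + d * (-Y) by ring, this]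
    simp only [qval, conjF]; ring

/-- Supersymmetry in terms of the roots. -/
lemma super_iff {m n k : ℤ} (hm : m ≠ 0) {x x' : ℝ} (hx : Irrational x)
    (hs : m * (x + x') = -k) (hp : m * (x * x') = n) :
    (SLEquiv (m, n, k) (conjF (m, n, k)) ∧ SLEquiv (m, n, k) (adjF (m, n, k))) ↔
      Mob 1 x x' x x' ∧ Mob 0 x' x x x' := by
  have hr : m * x ^ 2 + k * x + n = 0 := by linear_combination x * hs - hp
  have hr' : m * x' ^ 2 + k * x' + n = 0 := by linear_combination x' * hs - hp
  have hs' : m * (x' + x) = -k := by linear_combination hs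
  have hp' : m * (x' * x) = n := by linear_combination hp
  rw [SLEquiv_adj_iff, SLEquiv_conj_iff]
  constructor
  · rintro ⟨⟨p, q, r, s, k1, k2⟩, ⟨a, b, c, d, h1, h2⟩⟩
    have h3 : (a * p + b * r) * (c * q + d * s) - (a * q + b * s) * (c * p + d * r) = -1 := by
      linear_combination (p * s - q * r) * h1 + k1
    have h4 : ∀ X Y, qval (m, n, k) ((a * p + b * r) * X + (a * q + b * s) * Y)
        ((c * p + d * r) * X + (c * q + d * s) * Y) = - qval (m, n, k) X Y := by
      intro X Y
      rw [← k2 X Y, ← h2]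
      congr 1 <;> ring
    exact ⟨⟨_, _, _, _, by rw [h3]; norm_num, fix_of_form hm hr h3 h4, fix_of_form hm hr' h3 h4⟩,
      ⟨a, b, c, d, by rw [h1]; norm_num, swap_of_form hm hs hp h1 h2,
        swap_of_form hm hs' hp' h1 h2⟩⟩
  · rintro ⟨⟨p, q, r, s, k1, k2, _⟩, ⟨a, b, c, d, h1, h2, _⟩⟩
    have k3 := form_of_fix hm hx hr k2
    have h3 := form_of_swap hx hs hp hm h2
    rw [k1] at k3
    rw [h1] at h3
    refine ⟨⟨a * p + b * r, a * q + b * s, c * p + d * r, c * q + d * s, ?_, ?_⟩,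
      ⟨a, b, c, d, by rw [h1]; norm_num, fun X Y => by rw [h3]; ring⟩⟩
    · linear_combination (p * s - q * r) * h1 + k1
    · intro X Y
      have e1 := h3 (p * X + q * Y) (r * X + s * Y)
      rw [k3] at e1
      have e2 : qval (m, n, k) X Y = -(-1) ^ 0 * ((-1) ^ 1 * qval (m, n, k) X Y) := by ring
      rw [e2, ← e1]
      congr 1 <;> ring

end St5

namespace St5

/-- Periodic extension of a list. -/
def sg (s : List ℤ) (j : ℕ) : ℤ := s.getD (j % s.length) 0

lemma sg_congr {s : List ℤ} {i j : ℕ} (h : ((i : ℕ) : ZMod s.length) = (j : ZMod s.length)) :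
    sg s i = sg s j := by
  have := (ZMod.natCast_eq_natCast_iff' i j s.length).mp h
  rw [sg, sg, this]

lemma pal_iff {s : List ℤ} (hs : s ≠ []) (r : ℕ) : (s.rotate r).reverse = s.rotate r ↔
    ∀ i < s.length, sg s (r + (s.length - 1 - i)) = sg s (r + i) := by
  have hL : 0 < s.length := List.length_pos_iff.mpr hs
  have key : ∀ j (h : j < (s.rotate r).length), (s.rotate r)[j] = sg s (r + j) := by
    intro j h
    rw [List.getElem_rotate, sg, List.getD_eq_getElem _ _ (Nat.mod_lt _ hL)]
    simp only [add_comm]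
  constructor
  · intro h i hi
    have h1 : i < (s.rotate r).length := by simpa using hi
    have h2 : (s.rotate r).length - 1 - i < (s.rotate r).length := by omega
    rw [← key i h1]
    have : s.length - 1 - i = (s.rotate r).length - 1 - i := by simp
    rw [this, ← key _ h2, ← List.getElem_reverse (by simpa using hi)]
    simp only [h]
  · intro h
    apply List.ext_getElem (by simp)
    intro i h1 h2
    have hi : i < s.length := by simpa using h2
    rw [List.getElem_reverse, key, key, ← h i hi]
    simp

/-- Conjugate pair of quadratic irrationals. -/
def CP (x x' : ℝ) : Prop := Irrational x ∧ ∃ r s : ℚ, x + x' = r ∧ x * x' = s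

lemma CP.irr' {x x' : ℝ} (h : CP x x') : Irrational x' := by
  obtain ⟨h, r, s, h1, h2⟩ := h
  have : x' = r - x := by linarith
  rw [this]
  exact h.ratCast_sub r

lemma CP.sub_int {x x' : ℝ} (h : CP x x') (a : ℤ) : CP (x - a) (x' - a) := by
  obtain ⟨h, r, s, h1, h2⟩ := h
  refine ⟨h.sub_intCast a, r - 2 * a, s - a * r + a ^ 2, ?_, ?_⟩ <;> push_cast
  · linarith
  · linear_combination h2 - a * h1

lemma CP.inv {x x' : ℝ} (h : CP x x') : CP (1 / x) (1 / x') := by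
  have h0 := h.irr'.ne_zero
  obtain ⟨h, r, s, h1, h2⟩ := h
  have h00 := h.ne_zero
  refine ⟨irr_inv h, r / s, 1 / s, ?_, ?_⟩ <;> push_cast
  · rw [← h1, ← h2]; field_simp; ring
  · rw [← h2]; field_simp

lemma CP.ne {x x' : ℝ} (h : CP x x') : x ≠ x' := by
  rintro rfl
  obtain ⟨h, r, s, h1, h2⟩ := h
  apply h.ne_rat (r / 2)
  push_cast; linarith

lemma CP.unique {x y z : ℝ} (h : CP x y) (h' : CP x z) : y = z := by
  obtain ⟨h, r, s, h1, h2⟩ := h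
  obtain ⟨_, r', s', h1', h2'⟩ := h'
  by_cases hr : r = r'
  · subst hr; linarith
  · exfalso
    have hr' : (r : ℝ) - r' ≠ 0 := by
      intro h0; exact hr (by exact_mod_cast sub_eq_zero.mp h0)
    apply h.ne_rat ((s - s') / (r - r'))
    push_cast
    rw [eq_div_iff hr']
    linear_combination h2 - h2' + x * h1' - x * h1

noncomputable def zc (x x' : ℝ) : ℕ → ℝ
  | 0 => x'
  | n + 1 => 1 / (zc x x' n - cfTerm x n)

lemma zc_CP {x x' : ℝ} (h : CP x x') (n : ℕ) : CP (gaussIter x n) (zc x x' n) := by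
  induction n with
  | zero => exact h
  | succ n ih => exact (ih.sub_int _).inv

lemma zc_rec {x x' : ℝ} (n : ℕ) :
    zc x x' n = cfTerm x n + 1 / zc x x' (n+1) := by
  rw [zc]; simp

lemma Mob_step {x x' : ℝ} (h : CP x x') (i j : ℕ) :
    Mob j (gaussIter x i) (zc x x' i) (gaussIter x (i+j)) (zc x x' (i+j)) := by
  induction j with
  | zero => exact ⟨1, 0, 0, 1, by norm_num, by simp, by simp⟩
  | succ j ih =>
    refine ih.trans ⟨cfTerm x (i+j), 1, 1, 0, by norm_num, ?_, ?_⟩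
    · have h0 := (gi_irr h.1 (i+j+1)).ne_zero
      rw [gi_rec h.1 (i+j), ← add_assoc]; field_simp; push_cast; ring
    · have h0 := (zc_CP h (i+j+1)).irr'.ne_zero
      rw [zc_rec (i+j), ← add_assoc]; field_simp; push_cast; ring

lemma Mob.par {e f : ℕ} {x x' y y' : ℝ} (h : Mob e x x' y y') (hef : Even (e + f)) :
    Mob f x x' y y' := by
  obtain ⟨a, b, c, d, h, h1⟩ := h
  refine ⟨a, b, c, d, ?_, h1⟩
  rw [h]
  rcases Nat.even_or_odd e with he | he
  · rw [he.neg_one_pow, Even.neg_one_pow (by grind)]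
  · rw [he.neg_one_pow, Odd.neg_one_pow (by grind)]

lemma term_ge {x : ℝ} (h : Irrational x) (n : ℕ) : (1 : ℝ) ≤ cfTerm x (n+1) := by
  have : (1:ℤ) ≤ cfTerm x (n+1) := by
    rw [cfTerm, Int.le_floor]; exact_mod_cast (gi_gt_one h n).le
  exact_mod_cast this

lemma zc_neg {x x' : ℝ} (h : CP x x') : ∃ i0, ∀ i ≥ i0, -1 < zc x x' i ∧ zc x x' i < 0 := by
  have h1 : ∃ i, zc x x' (i+1) < 0 := by
    by_contra! hc
    have hp : ∀ i, 0 < zc x x' (i+1) := fun i =>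
      lt_of_le_of_ne (hc i) (zc_CP h (i+1)).irr'.ne_zero.symm
    have := cf_unique (fun i => gaussIter x (i+1)) (fun i => zc x x' (i+1))
      (fun i => cfTerm x (i+1)) (fun i => gi_rec h.1 (i+1)) (fun i => zc_rec (i+1))
      (fun i => gi_gt_one h.1 i) (fun i => by
        have := zc_rec (x := x) (x' := x') (i+1)
        have := term_ge h.1 i
        have := one_div_pos.mpr (hp (i+1))
        show 1 < zc x x' (i+1)
        linarith)
    exact (zc_CP h 1).ne this
  obtain ⟨i, hi⟩ := h1
  have step : ∀ j, zc x x' (j+1) < 0 → -1 < zc x x' (j+2) ∧ zc x x' (j+2) < 0 := by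
    intro j hj
    have := term_ge h.1 j
    have e : zc x x' (j+2) = 1 / (zc x x' (j+1) - cfTerm x (j+1)) := rfl
    have hlt : zc x x' (j+1) - cfTerm x (j+1) < -1 := by linarith
    rw [e]
    constructor
    · rw [lt_div_iff_of_neg (by linarith)]; linarith
    · exact one_div_neg.mpr (by linarith)
  refine ⟨i+2, fun j hj => ?_⟩
  obtain ⟨l, rfl⟩ := Nat.exists_eq_add_of_le hj
  induction l with
  | zero => exact step i hi
  | succ l ih =>
    have := step (i+1+l) (by convert (ih (by omega)).2 using 2; omega)
    convert this using 3 <;> omega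

/-- The data along a good tail. -/
lemma tail_data {x x' : ℝ} (h : CP x x') {s : List ℤ} (hs : IsCFPeriod s x) (r : ℕ) :
    ∃ K, (∀ j, cfTerm x (K + j) = sg s (r + j)) ∧
      (∀ i ≥ K, gaussIter x (i + s.length) = gaussIter x i) ∧
      (∀ j, gaussIter x (K + j) = sg s (r + j) + 1 / gaussIter x (K + (j + 1))) ∧
      (∀ j, 1 < gaussIter x (K + j)) ∧
      (zc x x' (K + s.length) = zc x x' K) ∧
      ∃ u : ℕ → ℝ, u 0 * zc x x' K = -1 ∧ (∀ j, 1 < u j) ∧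
        ∀ j, u j = sg s (r + (j + 1) * (s.length - 1)) + 1 / u (j+1) := by
  obtain ⟨hne, ⟨N, hN⟩, hmin⟩ := hs
  obtain ⟨i0, hi0⟩ := zc_neg h
  set L := s.length with hLdef
  have hL : 0 < L := List.length_pos_iff.mpr hne
  set K := N + r + L * (i0 + 1) with hK
  have hKi : i0 + 1 ≤ K := by nlinarith
  have hterm : ∀ j, cfTerm x (K + j) = sg s (r + j) := by
    intro j
    have := hN (r + L * (i0 + 1) + j)
    rw [show K + j = N + (r + L * (i0 + 1) + j) by omega, this]
    change sg s _ = _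
    apply sg_congr
    push_cast
    simp
  have hper : ∀ j, sg s (j + L) = sg s j := by
    intro j; apply sg_congr; push_cast; simp
  have hgt : ∀ j, 1 < gaussIter x (K + j) := by
    intro j
    have := gi_gt_one h.1 (K + j - 1)
    rwa [Nat.sub_add_cancel (by omega)] at this
  have hx : ∀ i ≥ K, gaussIter x (i + L) = gaussIter x i := by
    intro i hi
    obtain ⟨l, rfl⟩ := Nat.exists_eq_add_of_le hi
    have := cf_unique (fun j => gaussIter x (K + l + L + j)) (fun j => gaussIter x (K + l + j))
      (fun j => cfTerm x (K + l + j)) (fun j => by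
        have e := gi_rec h.1 (K + l + L + j)
        have : cfTerm x (K + l + L + j) = cfTerm x (K + l + j) := by
          rw [show K + l + L + j = K + (l + j + L) by ring, show K + l + j = K + (l + j) by ring,
            hterm, hterm, ← add_assoc, hper]
        rw [this] at e
        exact e) (fun j => gi_rec h.1 (K + l + j)) (fun j => by
          have := hgt (l + L + j)
          rwa [show K + (l + L + j) = K + l + L + j by ring] at this) (fun j => by
          have := hgt (l + j)
          rwa [show K + (l + j) = K + l + j by ring] at this)
    exact this
  have hz : ∀ i ≥ K, zc x x' (i + L) = zc x x' i := by
    intro i hi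
    have h1 := zc_CP h (i + L)
    rw [hx i hi] at h1
    exact h1.unique (zc_CP h i)
  refine ⟨K, hterm, hx, ?_, hgt, hz K le_rfl, fun j => -1 / zc x x' (K + j * (L - 1)), ?_, ?_, ?_⟩
  · intro j
    rw [← hterm]
    exact gi_rec h.1 (K + j)
  · have := (zc_CP h K).irr'.ne_zero
    simp only [zero_mul, add_zero]
    field_simp
  · intro j
    have h1 := hi0 (K + j * (L - 1)) (by omega)
    show 1 < -1 / zc x x' (K + j * (L - 1))
    rw [lt_div_iff_of_neg h1.2]; linarith
  · intro j
    rw [← hterm]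
    have h1 := hz (K + j * (L - 1)) (by omega)
    have h2 : K + j * (L - 1) + L = K + (j + 1) * (L - 1) + 1 := by
      rw [add_mul]; omega
    rw [h2] at h1
    have h3 := zc_rec (x := x) (x' := x') (K + (j + 1) * (L - 1))
    rw [h1] at h3
    have e1 : ∀ w : ℝ, -1 / w = - (1 / w) := fun w => by ring
    have e2 : ∀ w : ℝ, 1 / (-1 / w) = - w := fun w => by
      rw [one_div_div]; ring
    show -1 / zc x x' (K + j * (L - 1)) = cfTerm x (K + (j + 1) * (L - 1)) +
      1 / (-1 / zc x x' (K + (j + 1) * (L - 1)))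
    rw [e1, e2]
    linarith

lemma cast_pred {L : ℕ} (hL : 0 < L) : ((L - 1 : ℕ) : ZMod L) = -1 := by
  rw [Nat.cast_sub hL]; simp

lemma forward {x x' : ℝ} (h : CP x x') {s : List ℤ} (hs : IsCFPeriod s x)
    (hp : Palindromic s) (ho : Odd s.length) : Mob 1 x x' x x' ∧ Mob 0 x' x x x' := by
  obtain ⟨t, ⟨r, rfl⟩, ht⟩ := hp
  rw [pal_iff hs.1] at ht
  have hL : 0 < s.length := List.length_pos_iff.mpr hs.1
  obtain ⟨K, k1, k2, k3, k4, k5, u, u1, u2, u3⟩ := tail_data h hs r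
  have hu : ∀ j, sg s (r + (j + 1) * (s.length - 1)) = sg s (r + j) := by
    intro j
    have e1 : sg s (r + j) = sg s (r + j % s.length) := by
      apply sg_congr; push_cast; simp
    rw [e1, ← ht _ (Nat.mod_lt _ hL)]
    apply sg_congr
    rw [Nat.cast_add, Nat.cast_add, Nat.cast_sub (by have := Nat.mod_lt j hL; omega), Nat.cast_mul,
      cast_pred hL]
    simp
    ring
  have hux : u 0 = gaussIter x K := by
    refine cf_unique u (fun j => gaussIter x (K + j)) (fun j => sg s (r + j)) ?_ k3 u2 k4
    intro j
    rw [← hu]; exact u3 j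
  rw [hux] at u1
  have M := Mob_step h 0 K
  rw [zero_add] at M
  have P := Mob_step h K s.length
  rw [k2 K le_rfl, k5] at P
  constructor
  · exact ((M.trans P).trans M.symm).par (by grind)
  · have J : Mob 0 (zc x x' K) (gaussIter x K) (gaussIter x K) (zc x x' K) :=
      ⟨0, -1, 1, 0, by norm_num, by push_cast; linarith, by push_cast; linarith⟩
    exact ((M.swap.trans J).trans M.symm).par (by grind)

lemma dvd_period {x : ℝ} {s : List ℤ} (hs : IsCFPeriod s x) {N P : ℕ}
    (h : ∀ j, cfTerm x (N + j + P) = cfTerm x (N + j)) : s.length ∣ P := by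
  obtain ⟨hne, ⟨N', hN⟩, hmin⟩ := hs
  have hL : 0 < s.length := List.length_pos_iff.mpr hne
  by_contra hd
  have h1 : 1 ≤ P % s.length := Nat.pos_of_ne_zero fun h0 => hd (Nat.dvd_of_mod_eq_zero h0)
  have h2 := hmin (P % s.length) h1 ⟨N' + N, h1, fun j => by
    have e1 := h (N' + j)
    rw [show N + (N' + j) + P = N' + (N + j + P) by ring,
      show N + (N' + j) = N' + (N + j) by ring, hN] at e1
    rw [show N' + N + j + P % s.length = N' + (N + j + P % s.length) by ring,
      show N' + N + j = N' + (N + j) by ring, hN, ← e1]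
    congr 1
    simp [Nat.add_mod]⟩
  have := Nat.mod_lt P hL
  omega

lemma cfTerm_add (x : ℝ) (i j : ℕ) : cfTerm x (i + j) = cfTerm (gaussIter x i) j := by
  rw [cfTerm, cfTerm, gi_add]

lemma odd_of_TR {x : ℝ} {s : List ℤ} (hs : IsCFPeriod s x) (h : TR 1 x x) : Odd s.length := by
  obtain ⟨i, j, h, he⟩ := h
  wlog hij : i ≤ j generalizing i j
  · exact this j i h.symm (by rwa [add_comm j i]) (by omega)
  obtain ⟨P, rfl⟩ := Nat.exists_eq_add_of_le hij
  have : s.length ∣ P := dvd_period hs (N := i) fun l => by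
    rw [show i + l + P = i + P + l by ring, cfTerm_add, ← h, ← cfTerm_add]
  have hP : Odd P := by grind
  exact hP.of_dvd_nat this

lemma backward {x x' : ℝ} (h : CP x x') {s : List ℤ} (hs : IsCFPeriod s x)
    (h1 : Mob 1 x x' x x') (h2 : Mob 0 x' x x x') : Palindromic s ∧ Odd s.length := by
  have ho := odd_of_TR hs (h1.TR h.1)
  refine ⟨?_, ho⟩
  have hL : 0 < s.length := List.length_pos_iff.mpr hs.1
  obtain ⟨K, k1, k2, k3, k4, k5, u, u1, u2, u3⟩ := tail_data h hs 0
  have M := Mob_step h 0 K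
  rw [zero_add] at M
  have T1 := M.swap.TR (zc_CP h K).irr'
  have hz0 := (zc_CP h K).irr'
  have J : TR 0 (u 0) (zc x x' K) :=
    (serret hz0 _ 0 0 (-1) 1 0 (u 0) rfl (by norm_num) (by push_cast; linarith)).2
  have T : TR _ (u 0) x := (J.trans T1.symm).trans (h2.TR h.1)
  obtain ⟨i, j, hij, -⟩ := T
  rw [gi_seq u _ u3 u2] at hij
  have key : ∀ l, sg s ((i + K + l + 1) * (s.length - 1)) = sg s (j + l) := by
    intro l
    have e1 : gaussIter (u 0) (i + K + l) = gaussIter x (K + (j + l)) := by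
      rw [show i + K + l = i + (K + l) by ring, gi_add, gi_seq u _ u3 u2, hij, ← gi_add]
      congr 1; ring
    have e2 := k1 (j + l)
    rw [zero_add] at e2
    rw [← e2, cfTerm, ← e1, gi_seq u _ u3 u2]
    have := floor_eq _ _ _ (u3 (i + K + l)) (u2 _)
    rw [this, zero_add]
  obtain ⟨w, hw⟩ := ho
  refine ⟨s.rotate ((j + (i + K) * (s.length - 1)) * (w + 1)), ⟨_, rfl⟩, ?_⟩
  rw [pal_iff hs.1]
  intro l hl
  have hwz : (2 * w + 1 : ZMod s.length) = 0 := by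
    have : ((2 * w + 1 : ℕ) : ZMod s.length) = 0 := by rw [← hw]; simp
    simpa using this
  set r := (j + (i + K) * (s.length - 1)) * (w + 1) with hr
  have := key (l + r + j * (s.length - 1))
  have e1 : sg s (j + (l + r + j * (s.length - 1))) = sg s (r + l) := by
    apply sg_congr
    push_cast [cast_pred hL]; ring
  rw [← e1, ← this]
  apply sg_congr
  rw [Nat.cast_add, Nat.cast_sub (by omega), cast_pred hL, hr]
  push_cast [cast_pred hL]
  linear_combination ((j : ZMod s.length) - (i + K)) * hwz

end St5

/-- The period `Γ(m,n,k)` is palindromic and odd iff the class `C(m,n,k)` is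
supersymmetric. -/
theorem statement5 (m n k : ℤ)
    (hpos : 0 < formDisc (m, n, k)) (hsq : ¬ IsSquare (formDisc (m, n, k))) :
    ∀ s : List ℤ, IsCFPeriod s (xiPlus (m, n, k)) →
      ((Palindromic s ∧ Odd s.length) ↔
        (SLEquiv (m, n, k) (conjF (m, n, k)) ∧ SLEquiv (m, n, k) (adjF (m, n, k)))) := by
  intro s hs
  have hm : m ≠ 0 := by
    rintro rfl
    exact hsq ⟨k, by simp [formDisc]; ring⟩
  have hm' : (m : ℝ) ≠ 0 := by exact_mod_cast hm
  have hirr : Irrational (Real.sqrt ((formDisc (m, n, k) : ℤ) : ℝ)) :=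
    irrational_sqrt_intCast_iff.mpr ⟨hsq, hpos.le⟩
  have hsqr : Real.sqrt ((formDisc (m, n, k) : ℤ) : ℝ) ^ 2 = k ^ 2 - 4 * m * n := by
    rw [Real.sq_sqrt (by exact_mod_cast hpos.le)]
    simp [formDisc]
  have hsum : (m : ℝ) * (xiPlus (m, n, k) + xiMinus (m, n, k)) = -k := by
    simp only [xiPlus, xiMinus]; field_simp; ring
  have hprod : (m : ℝ) * (xiPlus (m, n, k) * xiMinus (m, n, k)) = n := by
    simp only [xiPlus, xiMinus]; field_simp
    linear_combination -hsqr
  have hx : Irrational (xiPlus (m, n, k)) := by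
    have e : xiPlus (m, n, k) = (((-k : ℤ) : ℝ) + Real.sqrt ((formDisc (m, n, k) : ℤ) : ℝ)) /
        ((2 * m : ℤ) : ℝ) := by
      simp [xiPlus]
    rw [e]
    exact (hirr.intCast_add (-k)).div_intCast (by simpa using hm)
  have hcp : St5.CP (xiPlus (m, n, k)) (xiMinus (m, n, k)) := by
    refine ⟨hx, -k / m, n / m, ?_, ?_⟩ <;> push_cast
    · rw [eq_div_iff hm']; linarith
    · rw [eq_div_iff hm']; linarith
  rw [St5.super_iff hm hx hsum hprod]
  exact ⟨fun ⟨hp, ho⟩ => St5.forward hcp hs hp ho, fun ⟨h1, h2⟩ => St5.backward hcp hs h1 h2⟩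
end

section
/- Let f=(m,n,k) be an integer binary quadratic form with discriminant Δ=k²−4mn>0 not a perfect square. The period Γ(f) is bipalindromic if and only if the class of f is k-symmetric, i.e., f is SL(2,ℤ)-equivalent to its conjugate (m,n,−k) but not to its adjoint (−n,−m,k). -/
/-! ### Equivalence of reals under integer matrices of determinant `e` -/

def MobEq (e : ℤ) (x y : ℝ) : Prop :=
  ∃ a b c d : ℤ, a * d - b * c = e ∧ x * (c * y + d) = a * y + b

theorem MobEq.symm {e : ℤ} {x y : ℝ} (h : MobEq e x y) : MobEq e y x := by
  obtain ⟨a, b, c, d, h1, h2⟩ := h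
  refine ⟨-d, b, c, -a, by linarith, ?_⟩
  push_cast
  linear_combination h2

theorem MobEq.trans {e e' : ℤ} {x y z : ℝ} (h : MobEq e x y) (h' : MobEq e' y z) :
    MobEq (e * e') x z := by
  obtain ⟨a, b, c, d, h1, h2⟩ := h
  obtain ⟨a', b', c', d', h1', h2'⟩ := h'
  refine ⟨a * a' + b * c', a * b' + b * d', c * a' + d * c', c * b' + d * d', ?_, ?_⟩
  · rw [← h1, ← h1']; ring
  · push_cast
    linear_combination (c' * z + d') * h2 + (a - x * c) * h2'

theorem mobEq_neg (x : ℝ) : MobEq (-1) (-x) x :=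
  ⟨-1, 0, 0, 1, by norm_num, by push_cast; ring⟩

theorem mobEq_neg_inv {x : ℝ} (hx : x ≠ 0) : MobEq 1 (-1 / x) x :=
  ⟨0, -1, 1, 0, by norm_num, by push_cast; field_simp; ring⟩

/-! ### Basic facts on the Gauss iterates -/

theorem gaussIter_add (x : ℝ) (n m : ℕ) :
    gaussIter x (n + m) = gaussIter (gaussIter x n) m := by
  induction m with
  | zero => rfl
  | succ m ih =>
    rw [← add_assoc]
    simp only [gaussIter]
    rw [ih]

theorem irr_step {x : ℝ} (hx : Irrational x) (a : ℤ) : Irrational (1 / (x - a)) := by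
  rw [one_div]
  exact (hx.sub_intCast a).inv

theorem irr_gaussIter {x : ℝ} (hx : Irrational x) (n : ℕ) : Irrational (gaussIter x n) := by
  induction n with
  | zero => exact hx
  | succ n ih => exact irr_step ih _

theorem fract_pos_irr {x : ℝ} (hx : Irrational x) : 0 < x - ⌊x⌋ := by
  have h1 := Int.floor_le x
  have h2 : x - ⌊x⌋ ≠ 0 := (hx.sub_intCast _).ne_zero
  exact lt_of_le_of_ne (by linarith) (Ne.symm h2)

theorem one_lt_gauss {x : ℝ} (hx : Irrational x) (n : ℕ) : 1 < gaussIter x (n + 1) := by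
  have h := fract_pos_irr (irr_gaussIter hx n)
  have h2 := Int.lt_floor_add_one (gaussIter x n)
  simp only [gaussIter]
  rw [lt_div_iff₀ h]
  linarith

theorem gauss_rec (x : ℝ) (n : ℕ) :
    gaussIter x n = cfTerm x n + 1 / gaussIter x (n + 1) := by
  simp only [gaussIter, cfTerm, one_div, inv_inv]
  ring

theorem mobEq_gauss {x : ℝ} (hx : Irrational x) (n : ℕ) :
    MobEq ((-1) ^ n) x (gaussIter x n) := by
  induction n with
  | zero => exact ⟨1, 0, 0, 1, by norm_num, by simp [gaussIter]⟩
  | succ n ih =>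
    rw [pow_succ]
    refine ih.trans ⟨cfTerm x n, 1, 1, 0, by ring, ?_⟩
    have h := gauss_rec x n
    have h1 := one_lt_gauss hx n
    rw [h]
    push_cast
    field_simp
    ring

/-- continued fraction terms determine the number -/
theorem cf_inj {x y : ℝ} (hx : Irrational x) (hy : Irrational y)
    (h : ∀ n, cfTerm x n = cfTerm y n) : x = y := by
  have key : ∀ k n : ℕ, |gaussIter x n - gaussIter y n| ≤ (1 / 4 : ℝ) ^ k := by
    intro k
    induction k with
    | zero =>
      intro n
      have h0 := h n
      simp only [cfTerm] at h0
      have := Int.abs_sub_lt_one_of_floor_eq_floor h0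
      simpa using this.le
    | succ k ih =>
      intro n
      have ex := gauss_rec x n
      have ey := gauss_rec y n
      have ex1 := gauss_rec x (n + 1)
      have ey1 := gauss_rec y (n + 1)
      have gx1 := one_lt_gauss hx n
      have gy1 := one_lt_gauss hy n
      have gx2 := one_lt_gauss hx (n + 1)
      have gy2 := one_lt_gauss hy (n + 1)
      have px : (1 : ℝ) ≤ cfTerm x (n + 1) := by
        have : (1 : ℤ) ≤ cfTerm x (n + 1) := by
          unfold cfTerm
          rw [Int.le_floor]
          exact_mod_cast gx1.le
        exact_mod_cast this
      rw [← h] at ey ey1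
      have ih2 := ih (n + 1 + 1)
      set X := gaussIter x (n + 1 + 1)
      set Y := gaussIter y (n + 1 + 1)
      set a : ℝ := ((cfTerm x (n + 1) : ℤ) : ℝ)
      have e1 : gaussIter x n - gaussIter y n = (X - Y) / ((a * X + 1) * (a * Y + 1)) := by
        have h1 : a * X + 1 ≠ 0 := by positivity
        have h2 : a * Y + 1 ≠ 0 := by positivity
        rw [ex, ey, ex1, ey1]
        have h3 : a + 1 / X = (a * X + 1) / X := by field_simp
        have h4 : a + 1 / Y = (a * Y + 1) / Y := by field_simp
        rw [h3, h4]
        field_simp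
        ring
      have h5 : (4 : ℝ) ≤ (a * X + 1) * (a * Y + 1) := by
        have : 2 ≤ a * X + 1 := by nlinarith
        have : 2 ≤ a * Y + 1 := by nlinarith
        nlinarith
      rw [e1, abs_div, abs_of_pos (by linarith : 0 < (a * X + 1) * (a * Y + 1)),
        div_le_iff₀ (by linarith), pow_succ]
      have : 0 < (1 / 4 : ℝ) ^ k := by positivity
      nlinarith
  have h0 : ∀ k : ℕ, |x - y| ≤ (1 / 4 : ℝ) ^ k := fun k => key k 0
  by_contra hne
  have hp : 0 < |x - y| := abs_pos.mpr (sub_ne_zero.mpr hne)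
  obtain ⟨k, hk⟩ := exists_pow_lt_of_lt_one hp (by norm_num : (1 / 4 : ℝ) < 1)
  linarith [h0 k]

/-! ### Serret's theorem with parity -/

def TailEq (e : ℤ) (x y : ℝ) : Prop :=
  ∃ N M : ℕ, (-1 : ℤ) ^ (N + M) = e ∧ gaussIter x N = gaussIter y M

theorem TailEq.symm {e : ℤ} {x y : ℝ} (h : TailEq e x y) : TailEq e y x := by
  obtain ⟨N, M, h1, h2⟩ := h
  exact ⟨M, N, by rw [add_comm]; exact h1, h2.symm⟩

theorem TailEq.trans {e e' : ℤ} {x y z : ℝ} (h : TailEq e x y) (h' : TailEq e' y z) :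
    TailEq (e * e') x z := by
  obtain ⟨N, M, h1, h2⟩ := h
  obtain ⟨N', M', h1', h2'⟩ := h'
  refine ⟨N + N', M' + M, ?_, ?_⟩
  · rw [← h1, ← h1']; ring
  · rw [gaussIter_add, h2, ← gaussIter_add, add_comm M, gaussIter_add y, h2', ← gaussIter_add]

theorem tailEq_transl (x : ℝ) (n : ℤ) : TailEq 1 (x + n) x :=
  ⟨1, 1, by norm_num, by simp [gaussIter]⟩

theorem gauss_one_of {x : ℝ} (a : ℤ) (h0 : (a : ℝ) ≤ x) (h1 : x < a + 1) :
    gaussIter x 1 = 1 / (x - a) := by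
  have : ⌊x⌋ = a := Int.floor_eq_iff.mpr ⟨h0, h1⟩
  simp [gaussIter, this]

theorem tailEq_refl_one_sub {x : ℝ} (h0 : 0 < x) (h1 : x < 1 / 2) :
    TailEq (-1) (1 - x) x := by
  refine TailEq.trans (y := 1 / x - 1) (e := 1) (e' := -1) ?_ ?_
  · refine ⟨2, 0, by norm_num, ?_⟩
    have e1 : gaussIter (1 - x) 1 = 1 / (1 - x) := by
      rw [gauss_one_of 0 (by push_cast; linarith) (by push_cast; linarith)]; simp
    have hx : 0 < 1 - x := by linarith
    rw [show (2 : ℕ) = 1 + 1 from rfl, gaussIter_add, e1,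
      gauss_one_of 1 (by push_cast; rw [le_div_iff₀ hx]; linarith)
        (by push_cast; rw [div_lt_iff₀ hx]; linarith)]
    simp only [gaussIter]
    push_cast
    have : 1 / (1 - x) - 1 = x / (1 - x) := by field_simp; ring
    rw [this]
    field_simp
  · have := tailEq_transl (1 / x) (-1)
    have h2 : TailEq (-1) (1 / x) x := by
      refine ⟨0, 1, by norm_num, ?_⟩
      rw [gauss_one_of 0 (by push_cast; linarith) (by push_cast; linarith)]
      simp [gaussIter]
    have h3 := this.trans h2
    push_cast at h3
    simpa [sub_eq_add_neg] using h3

theorem tailEq_neg {x : ℝ} (hx : Irrational x) : TailEq (-1) (-x) x := by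
  set z := x - ⌊x⌋ with hz
  have zi : Irrational z := hx.sub_intCast _
  have z0 : 0 < z := fract_pos_irr hx
  have z1 : z < 1 := by have := Int.lt_floor_add_one x; linarith
  have hh : z ≠ 1 / 2 := by
    intro h
    apply zi
    exact ⟨1 / 2, by rw [h]; norm_num⟩
  have key : TailEq (-1) (1 - z) z := by
    rcases lt_or_gt_of_ne hh with h | h
    · exact tailEq_refl_one_sub z0 h
    · have := (tailEq_refl_one_sub (x := 1 - z) (by linarith) (by linarith)).symm
      simpa using this
  have a1 : TailEq 1 (-x) (1 - z) := by
    have := tailEq_transl (1 - z) (-1 - ⌊x⌋)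
    have e : (1 - z) + ((-1 - ⌊x⌋ : ℤ) : ℝ) = -x := by push_cast; rw [hz]; ring
    rwa [e] at this
  have a2 : TailEq 1 z x := by
    have := tailEq_transl x (-⌊x⌋)
    have e : x + ((-⌊x⌋ : ℤ) : ℝ) = z := by push_cast; rw [hz]; ring
    rwa [e] at this
  simpa using (a1.trans key).trans a2

theorem tailEq_inv_pos {x : ℝ} (hx : Irrational x) (h0 : 0 < x) : TailEq (-1) (1 / x) x := by
  have base : ∀ y : ℝ, 0 < y → y < 1 → TailEq (-1) (1 / y) y := by
    intro y h0 h1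
    refine ⟨0, 1, by norm_num, ?_⟩
    rw [gauss_one_of 0 (by push_cast; linarith) (by push_cast; linarith)]
    simp [gaussIter]
  rcases lt_or_gt_of_ne hx.ne_one with h | h
  · exact base x h0 h
  · have := (base (1 / x) (by positivity) (by rw [div_lt_one h0]; exact h)).symm
    simpa using this

theorem tailEq_inv {x : ℝ} (hx : Irrational x) : TailEq (-1) (1 / x) x := by
  rcases lt_or_gt_of_ne hx.ne_zero with h | h
  · have h1 := tailEq_inv_pos hx.neg (by linarith)
    have h2 := tailEq_neg hx
    have h3 : Irrational (1 / -x) := by rw [one_div]; exact hx.neg.inv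
    have h4 := tailEq_neg h3
    have e : -(1 / -x) = 1 / x := by rw [div_neg, neg_neg]
    rw [e] at h4
    simpa using (h4.trans h1).trans h2
  · exact tailEq_inv_pos hx h

theorem serret_aux (N : ℕ) : ∀ (a b c d e : ℤ) (x y : ℝ), c.natAbs ≤ N → (e = 1 ∨ e = -1) →
    a * d - b * c = e → Irrational x → Irrational y → x * (c * y + d) = a * y + b →
    TailEq e x y := by
  induction N with
  | zero =>
    intro a b c d e x y hc he hdet hx hy h
    have hc0 : c = 0 := by omega
    subst hc0
    have had : a * d = e := by linarith
    have hdd : d = 1 ∨ d = -1 := by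
      apply Int.isUnit_iff.mp
      apply isUnit_of_dvd_unit (y := e)
      · exact ⟨a, by linarith⟩
      · exact Int.isUnit_iff.mpr he
    have hd2 : (d : ℝ) * d = 1 := by rcases hdd with h | h <;> rw [h] <;> norm_num
    have hadr : (a : ℝ) * d = e := by exact_mod_cast had
    have hxe : x = e * y + ((d * b : ℤ) : ℝ) := by
      push_cast at h ⊢
      rw [← hadr]
      linear_combination d * h - x * hd2
    rcases he with he | he
    · subst he
      rw [hxe]
      have := tailEq_transl y (d * b)
      simpa using this
    · subst he
      rw [hxe]
      have := (tailEq_transl (-y) (d * b)).trans (tailEq_neg hy)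
      simpa using this
  | succ N ih =>
    intro a b c d e x y hc he hdet hx hy h
    by_cases hc0 : c = 0
    · exact ih a b c d e x y (by omega) he hdet hx hy h
    · have hq : c * (a / c) + a % c = a := Int.mul_ediv_add_emod a c
      set q := a / c
      set r := a % c with hr
      have hr0 : 0 ≤ r := Int.emod_nonneg _ hc0
      have hr1 : r < |c| := Int.emod_lt_abs _ hc0
      rw [Int.abs_eq_natAbs] at hr1
      have hxq : Irrational (x - q) := hx.sub_intCast q
      have h1 := ih c d r (b - q * d) (-e) (1 / (x - q)) y (by omega)
        (by rcases he with h | h <;> simp [h])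
        (by linear_combination (-1) * hdet - d * hq) (irr_step hx q) hy (by
          have hqr : (c : ℝ) * q + r = a := by exact_mod_cast hq
          have := hxq.ne_zero
          push_cast
          field_simp
          linear_combination (-1) * h + y * hqr)
      have h2 : TailEq (-1) x (1 / (x - q)) := by
        have h3 := tailEq_transl x (-q)
        have h4 := tailEq_inv hxq
        push_cast at h3
        rw [← sub_eq_add_neg] at h3
        simpa using h3.symm.trans h4.symm
      simpa using h2.trans h1

theorem mobEq_iff_tailEq {x y : ℝ} (hx : Irrational x) (hy : Irrational y) {e : ℤ}
    (he : e = 1 ∨ e = -1) : MobEq e x y ↔ TailEq e x y := by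
  constructor
  · rintro ⟨a, b, c, d, h1, h2⟩
    exact serret_aux c.natAbs a b c d e x y le_rfl he h1 hx hy h2
  · rintro ⟨N, M, h1, h2⟩
    have a1 := mobEq_gauss hx N
    have a2 := (mobEq_gauss hy M).symm
    rw [h2] at a1
    have := a1.trans a2
    rwa [← pow_add, h1] at this

/-! ### Galois conjugation in a real quadratic field -/

def QConj (w x x' : ℝ) : Prop :=
  ∃ u v : ℚ, v ≠ 0 ∧ x = u + v * w ∧ x' = u - v * w

theorem QConj.irr {w x x' : ℝ} (hw : Irrational w) (h : QConj w x x') : Irrational x := by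
  obtain ⟨u, v, hv, rfl, rfl⟩ := h
  exact (hw.ratCast_mul hv).ratCast_add u

theorem QConj.irr' {w x x' : ℝ} (hw : Irrational w) (h : QConj w x x') : Irrational x' := by
  obtain ⟨u, v, hv, rfl, rfl⟩ := h
  exact (hw.ratCast_mul hv).ratCast_sub u

theorem QConj.ne {w x x' : ℝ} (hw : Irrational w) (h : QConj w x x') : x ≠ x' := by
  obtain ⟨u, v, hv, rfl, rfl⟩ := h
  intro h
  have : (v : ℝ) * w = 0 := by linarith
  exact (hw.ratCast_mul hv).ne_zero this

theorem QConj.uniq {w x x' x'' : ℝ} (hw : Irrational w) (h : QConj w x x')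
    (h' : QConj w x x'') : x' = x'' := by
  obtain ⟨u, v, hv, h1, rfl⟩ := h
  obtain ⟨u', v', hv', h1', rfl⟩ := h'
  have e : ((u - u' : ℚ) : ℝ) = ((v' - v : ℚ) : ℝ) * w := by push_cast; linarith
  have hvv : v' - v = 0 := by
    by_contra hne
    exact (hw.ratCast_mul hne) ⟨u - u', e⟩
  rw [hvv] at e
  have hu : u - u' = 0 := by
    have : ((u - u' : ℚ) : ℝ) = 0 := by rw [e]; simp
    exact_mod_cast this
  rw [sub_eq_zero.mp hvv, sub_eq_zero.mp hu]

theorem QConj.step {w x x' : ℝ} {D : ℤ} (hw : Irrational w) (hD : w ^ 2 = D)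
    (h : QConj w x x') (a : ℤ) : QConj w (1 / (x - a)) (1 / (x' - a)) := by
  have i1 := (irr_step (h.irr hw) a).ne_zero
  have i2 := (irr_step (h.irr' hw) a).ne_zero
  have j1 : x - a ≠ 0 := ((h.irr hw).sub_intCast a).ne_zero
  have j2 : x' - a ≠ 0 := ((h.irr' hw).sub_intCast a).ne_zero
  obtain ⟨u, v, hv, rfl, rfl⟩ := h
  have hn : (((u - a) ^ 2 - v ^ 2 * D : ℚ) : ℝ) = ((u : ℝ) + v * w - a) * (u - v * w - a) := by
    push_cast
    rw [← hD]
    ring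
  have hn0 : ((u - a) ^ 2 - v ^ 2 * D : ℚ) ≠ 0 := by
    intro h0
    rw [h0] at hn
    have := mul_ne_zero j1 j2
    rw [← hn] at this
    simp at this
  refine ⟨(u - a) / ((u - a) ^ 2 - v ^ 2 * D), -v / ((u - a) ^ 2 - v ^ 2 * D),
    div_ne_zero (neg_ne_zero.mpr hv) hn0, ?_, ?_⟩
  · rw [Rat.cast_div, Rat.cast_div, hn]
    push_cast
    field_simp
    ring
  · rw [Rat.cast_div, Rat.cast_div, hn]
    push_cast
    field_simp
    ring

/-! ### Forms and their roots -/

theorem disc_m_ne {m n k : ℤ} (hsq : ¬ IsSquare (formDisc (m, n, k))) : m ≠ 0 := by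
  rintro rfl
  apply hsq
  exact ⟨k, by simp [formDisc]; ring⟩

theorem xi_eq {m n k D : ℤ} (hsq : ¬ IsSquare D) (hD : formDisc (m, n, k) = D) :
    2 * (m : ℝ) * xiPlus (m, n, k) = Real.sqrt D - k := by
  have hm : (m : ℝ) ≠ 0 := by
    have := disc_m_ne (m := m) (n := n) (k := k) (by rwa [hD])
    exact_mod_cast this
  simp only [xiPlus, hD]
  field_simp
  ring

theorem irr_w {D : ℤ} (hpos : 0 < D) (hsq : ¬ IsSquare D) : Irrational (Real.sqrt D) := by
  rw [irrational_sqrt_intCast_iff]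
  exact ⟨hsq, hpos.le⟩

theorem slEquiv_iff {m n k m' n' k' D : ℤ} (hpos : 0 < D) (hsq : ¬ IsSquare D)
    (hD : formDisc (m, n, k) = D) (hD' : formDisc (m', n', k') = D) :
    SLEquiv (m, n, k) (m', n', k') ↔ MobEq 1 (xiPlus (m, n, k)) (xiPlus (m', n', k')) := by
  have e1 := xi_eq hsq hD
  have e2 := xi_eq hsq hD'
  have hw := irr_w hpos hsq
  have hw2 : Real.sqrt D ^ 2 = D := Real.sq_sqrt (by exact_mod_cast hpos.le)
  have hm : (m : ℝ) ≠ 0 := by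
    have := disc_m_ne (m := m) (n := n) (k := k) (by rwa [hD])
    exact_mod_cast this
  have hm' : m' ≠ 0 := disc_m_ne (n := n') (k := k') (by rwa [hD'])
  have hmr' : (m' : ℝ) ≠ 0 := by exact_mod_cast hm'
  simp only [formDisc] at hD hD'
  set x := xiPlus (m, n, k)
  set y := xiPlus (m', n', k')
  set w := Real.sqrt D
  have hDr : (k : ℝ) ^ 2 - 4 * m * n = w ^ 2 := by rw [hw2]; exact_mod_cast hD
  have hroot : (m : ℝ) * x ^ 2 + k * x + n = 0 := by
    have hx : w = 2 * m * x + k := by linarith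
    rw [hx] at hDr
    have : 4 * (m : ℝ) * (m * x ^ 2 + k * x + n) = 0 := by linear_combination (-1) * hDr
    rcases mul_eq_zero.mp this with h | h
    · exact absurd h (by simpa using hm)
    · exact h
  have key : ∀ a b c d : ℤ, a * d - b * c = 1 →
      2 * ((m * a ^ 2 + n * c ^ 2 + k * a * c : ℤ) : ℝ) * (d * x - b)
       = (w - ((2 * m * a * b + 2 * n * c * d + k * (a * d + b * c) : ℤ) : ℝ)) * (a - c * x) := by
    intro a b c d h
    have hr : (a : ℝ) * d - b * c = 1 := by exact_mod_cast h
    have hx : w = 2 * m * x + k := by linarith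
    rw [hx]
    push_cast
    linear_combination 2 * c * hroot + (k * a + k * c * x + 2 * m * a * x + 2 * n * c) * hr
  constructor
  · rintro ⟨a, b, c, d, hdet, h⟩
    refine ⟨a, b, c, d, hdet, ?_⟩
    have q1 := h 1 0
    have q2 := h 0 1
    have q3 := h 1 1
    simp only [qval] at q1 q2 q3
    have g1 : m * a ^ 2 + n * c ^ 2 + k * a * c = m' := by linear_combination (-1) * q1
    have g3 : 2 * m * a * b + 2 * n * c * d + k * (a * d + b * c) = k' := by
      linear_combination (-1) * q3 + q1 + q2
    have kk := key a b c d hdet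
    rw [g1, g3, ← e2] at kk
    have : 2 * (m' : ℝ) * (d * x - b - y * (a - c * x)) = 0 := by linear_combination kk
    rcases mul_eq_zero.mp this with h | h
    · exact absurd h (by simpa using hmr')
    · linear_combination h
  · rintro ⟨a, b, c, d, hdet, h⟩
    refine ⟨a, b, c, d, hdet, ?_⟩
    have kk := key a b c d hdet
    have hdisc : (2 * m * a * b + 2 * n * c * d + k * (a * d + b * c)) ^ 2
        - 4 * (m * a ^ 2 + n * c ^ 2 + k * a * c) * (m * b ^ 2 + n * d ^ 2 + k * b * d) = D := by
      rw [← hD]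
      linear_combination (k ^ 2 - 4 * m * n) * (a * d - b * c + 1) * hdet
    have hx0 : (a : ℝ) - c * x ≠ 0 := by
      intro h0
      have hxi : Irrational x := by
        have : x = (w - k) / (2 * m : ℤ) := by
          push_cast; field_simp; linarith
        rw [this]
        refine (hw.sub_intCast k).div_intCast ?_
        have : m ≠ 0 := by exact_mod_cast hm
        omega
      have hc : c = 0 := by
        by_contra hc
        have := (hxi.intCast_mul hc)
        exact this ⟨a, by push_cast; linarith⟩
      subst hc
      have : a = 0 := by
        have : (a : ℝ) = 0 := by simpa using h0
        exact_mod_cast this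
      subst this
      simp at hdet
    obtain ⟨m0, hm0⟩ : ∃ m0, m0 = m * a ^ 2 + n * c ^ 2 + k * a * c := ⟨_, rfl⟩
    obtain ⟨n0, hn0⟩ : ∃ n0, n0 = m * b ^ 2 + n * d ^ 2 + k * b * d := ⟨_, rfl⟩
    obtain ⟨k0, hk0⟩ : ∃ k0, k0 = 2 * m * a * b + 2 * n * c * d + k * (a * d + b * c) := ⟨_, rfl⟩
    rw [← hm0, ← hk0] at kk
    rw [← hm0, ← hk0, ← hn0] at hdisc
    have e0 : 2 * (m0 : ℝ) * y = w - k0 := by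
      apply mul_right_cancel₀ hx0
      rw [← kk]
      linear_combination 2 * (m0 : ℝ) * (-1) * h
    have e3 : ((m' - m0 : ℤ) : ℝ) * w = ((m' * k0 - m0 * k' : ℤ) : ℝ) := by
      push_cast
      linear_combination (-1) * (m' : ℝ) * e0 + m0 * e2
    have g1 : m0 = m' := by
      by_contra hne
      exact (hw.intCast_mul (sub_ne_zero.mpr (Ne.symm hne))) ⟨m' * k0 - m0 * k', by rw [e3]; push_cast; rfl⟩
    subst g1
    have g2 : k0 = k' := by
      have : (k0 : ℝ) = k' := by linarith
      exact_mod_cast this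
    subst g2
    have g3 : n0 = n' := by
      have : m0 * (n0 - n') = 0 := by linarith
      rcases mul_eq_zero.mp this with h | h
      · exact absurd h hm'
      · linarith
    subst g3
    intro X Y
    simp only [qval]
    rw [hm0, hk0, hn0]
    ring

theorem xi_conj_pair {m n k : ℤ} (hsq : ¬ IsSquare (formDisc (m, n, k))) :
    QConj (Real.sqrt (formDisc (m, n, k) : ℤ)) (xiPlus (m, n, k)) (xiMinus (m, n, k)) := by
  have hm := disc_m_ne hsq
  have hmr : (m : ℝ) ≠ 0 := by exact_mod_cast hm
  have hmq : (m : ℚ) ≠ 0 := by exact_mod_cast hm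
  refine ⟨-k / (2 * m), 1 / (2 * m), by positivity, ?_, ?_⟩
  · simp only [xiPlus]
    push_cast
    field_simp
  · simp only [xiMinus]
    push_cast
    field_simp

theorem xi_conjF (m n k : ℤ) : xiPlus (conjF (m, n, k)) = - xiMinus (m, n, k) := by
  simp only [xiPlus, xiMinus, conjF, formDisc]
  push_cast
  rw [← neg_div]
  congr 1
  rw [neg_sq]
  ring

theorem xi_adjF {m n k : ℤ} (hpos : 0 < formDisc (m, n, k))
    (hsq : ¬ IsSquare (formDisc (m, n, k))) :
    xiPlus (adjF (m, n, k)) = -1 / xiMinus (m, n, k) := by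
  have hm := disc_m_ne hsq
  have hmr : (m : ℝ) ≠ 0 := by exact_mod_cast hm
  have hn : n ≠ 0 := by
    rintro rfl
    exact hsq ⟨k, by simp [formDisc]; ring⟩
  have hnr : (n : ℝ) ≠ 0 := by exact_mod_cast hn
  have hD : formDisc (adjF (m, n, k)) = formDisc (m, n, k) := by
    simp only [formDisc, adjF]; ring
  have hx := ((xi_conj_pair hsq).irr' (irr_w hpos hsq)).ne_zero
  have hw2 : Real.sqrt (formDisc (m, n, k)) ^ 2 = k ^ 2 - 4 * m * n := by
    rw [Real.sq_sqrt (by exact_mod_cast hpos.le)]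
    simp only [formDisc]; push_cast; ring
  rw [eq_div_iff hx]
  simp only [xiPlus, xiMinus, hD]
  simp only [adjF]
  set w := Real.sqrt (formDisc (m, n, k))
  push_cast
  field_simp
  linear_combination hw2

theorem conj_iff {m n k : ℤ} (hpos : 0 < formDisc (m, n, k))
    (hsq : ¬ IsSquare (formDisc (m, n, k))) :
    SLEquiv (m, n, k) (conjF (m, n, k)) ↔
      MobEq (-1) (xiPlus (m, n, k)) (xiMinus (m, n, k)) := by
  have h := slEquiv_iff (m := m) (n := n) (k := k) (m' := m) (n' := n) (k' := -k)
    hpos hsq rfl (by simp [formDisc])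
  have e := xi_conjF m n k
  unfold conjF at e ⊢
  simp only at e ⊢
  rw [h, e]
  constructor
  · intro h
    simpa using h.trans (mobEq_neg _)
  · intro h
    simpa using h.trans (mobEq_neg _).symm

theorem adj_iff {m n k : ℤ} (hpos : 0 < formDisc (m, n, k))
    (hsq : ¬ IsSquare (formDisc (m, n, k))) :
    SLEquiv (m, n, k) (adjF (m, n, k)) ↔
      MobEq 1 (xiPlus (m, n, k)) (xiMinus (m, n, k)) := by
  have h := slEquiv_iff (m := m) (n := n) (k := k) (m' := -n) (n' := -m) (k' := k)
    hpos hsq rfl (by simp only [formDisc]; ring)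
  have e := xi_adjF hpos hsq
  have hx := ((xi_conj_pair hsq).irr' (irr_w hpos hsq)).ne_zero
  unfold adjF at e ⊢
  simp only at e ⊢
  rw [h, e]
  constructor
  · intro h
    simpa using h.trans (mobEq_neg_inv hx)
  · intro h
    simpa using h.trans (mobEq_neg_inv hx).symm

/-! ### Purely periodic expansions and Galois' theorem on the conjugate -/

noncomputable def cseq (a : ℕ → ℤ) (x' : ℝ) : ℕ → ℝ
  | 0 => x'
  | n + 1 => 1 / (cseq a x' n - (a n : ℝ))

theorem cseq_conj {w x x' : ℝ} {D : ℤ} (hw : Irrational w) (hD : w ^ 2 = D)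
    (h : QConj w x x') (n : ℕ) : QConj w (gaussIter x n) (cseq (cfTerm x) x' n) := by
  induction n with
  | zero => exact h
  | succ n ih => exact ih.step hw hD _

theorem mobEq_cseq {a : ℕ → ℤ} {x' : ℝ} (hx : ∀ n, Irrational (cseq a x' n)) (n : ℕ) :
    MobEq ((-1) ^ n) x' (cseq a x' n) := by
  induction n with
  | zero => exact ⟨1, 0, 0, 1, by norm_num, by simp [cseq]⟩
  | succ n ih =>
    rw [pow_succ]
    refine ih.trans ⟨a n, 1, 1, 0, by ring, ?_⟩
    have h1 : cseq a x' n - a n ≠ 0 := ((hx n).sub_intCast _).ne_zero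
    simp only [cseq]
    push_cast
    field_simp
    ring

theorem galois_reverse {w x x' : ℝ} {D : ℤ} (hw : Irrational w) (hD : w ^ 2 = D)
    (h : QConj w x x') (hx1 : 1 < x) (A : ℤ → ℤ) (p : ℕ) (hp : 1 ≤ p)
    (hA : ∀ i t : ℤ, A (i + p * t) = A i) (hcf : ∀ j : ℕ, cfTerm x j = A j) :
    Irrational (-1 / x') ∧ ∀ j : ℕ, cfTerm (-1 / x') j = A (-1 - j) := by
  have hx := h.irr hw
  have hx' := h.irr' hw
  have hper : ∀ n, gaussIter x (n + p) = gaussIter x n := by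
    intro n
    apply cf_inj (irr_gaussIter hx _) (irr_gaussIter hx _)
    intro j
    have e1 : ∀ l, cfTerm (gaussIter x l) j = cfTerm x (l + j) := by
      intro l; simp only [cfTerm, gaussIter_add]
    rw [e1, e1, hcf, hcf]
    have := hA ((n + j : ℕ) : ℤ) 1
    rw [← this]
    congr 1
    push_cast
    ring
  have ha : ∀ n, (1 : ℤ) ≤ cfTerm x n := by
    intro n
    unfold cfTerm
    rw [Int.le_floor]
    cases n with
    | zero => simpa [gaussIter] using hx1.le
    | succ n => simpa using (one_lt_gauss hx n).le
  have har : ∀ n, (1 : ℝ) ≤ cfTerm x n := fun n => by exact_mod_cast ha n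
  set z := cseq (cfTerm x) x' with hz
  have hzc : ∀ n, QConj w (gaussIter x n) (z n) := cseq_conj hw hD h
  have hzi : ∀ n, Irrational (z n) := fun n => (hzc n).irr' hw
  have hzp : ∀ n, z (n + p) = z n := by
    intro n
    have h1 := hzc (n + p)
    rw [hper] at h1
    exact h1.uniq hw (hzc n)
  have hzpm : ∀ t n, z (n + p * t) = z n := by
    intro t
    induction t with
    | zero => intro n; simp
    | succ t ih => intro n; rw [Nat.mul_succ, ← add_assoc, hzp, ih]
  have hzs : ∀ n, z (n + 1) = 1 / (z n - cfTerm x n) := fun n => rfl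
  have hneg : ∃ i, z i < 0 := by
    by_contra hcon
    push Not at hcon
    have hzpos : ∀ i, 0 < z i := fun i => lt_of_le_of_ne (hcon i) (Ne.symm (hzi i).ne_zero)
    have h1 : ∀ i, 0 < z i - cfTerm x i := by
      intro i
      have := hzpos (i + 1)
      rw [hzs] at this
      exact one_div_pos.mp this
    have h2 : ∀ i, z i - cfTerm x i < 1 := by
      intro i
      have h3 := h1 (i + 1)
      have h4 := har (i + 1)
      have h5 : 1 < z (i + 1) := by linarith
      rw [hzs, lt_div_iff₀ (h1 i)] at h5
      linarith
    have h3 : ∀ i, ⌊z i⌋ = cfTerm x i := fun i =>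
      Int.floor_eq_iff.mpr ⟨by linarith [h1 i], by linarith [h2 i]⟩
    have h4 : ∀ n, gaussIter x' n = z n := by
      intro n
      induction n with
      | zero => rfl
      | succ n ih => simp only [gaussIter]; rw [ih, h3, hzs]
    refine h.ne hw (cf_inj hx hx' ?_)
    intro n
    rw [← h3, ← h4]
    rfl
  obtain ⟨i, hi⟩ := hneg
  have hstep : ∀ n, z n < 0 → -1 < z (n + 1) ∧ z (n + 1) < 0 := by
    intro n hn
    have h1 := har n
    have h2 : z n - cfTerm x n < 0 := by linarith
    rw [hzs]
    refine ⟨?_, by rw [one_div]; exact inv_lt_zero.mpr h2⟩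
    rw [lt_div_iff_of_neg h2]
    linarith
  have hfrom : ∀ j, -1 < z (i + 1 + j) ∧ z (i + 1 + j) < 0 := by
    intro j
    induction j with
    | zero => exact hstep i hi
    | succ j ih => exact hstep _ ih.2
  have hall : ∀ n, -1 < z n ∧ z n < 0 := by
    intro n
    have h1 : i + 1 ≤ n + p * (i + 1) := by nlinarith
    obtain ⟨j, hj⟩ := Nat.exists_eq_add_of_le h1
    rw [← hzpm (i + 1) n, hj]
    exact hfrom j
  have hy1 : ∀ n, 1 < -1 / z n := by
    intro n
    rw [lt_div_iff_of_neg (hall n).2]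
    linarith [(hall n).1]
  have hys : ∀ n, -1 / z (n + 1) = cfTerm x n - z n := by
    intro n
    have h1 := har n
    have h2 : z n - cfTerm x n ≠ 0 := by linarith [(hall n).2]
    rw [hzs]
    field_simp
    ring
  have hyf : ∀ n, ⌊-1 / z (n + 1)⌋ = cfTerm x n := by
    intro n
    rw [hys, Int.floor_eq_iff]
    constructor <;> linarith [(hall n).1, (hall n).2]
  have hyg : ∀ j n, gaussIter (-1 / z (n + j)) j = -1 / z n := by
    intro j
    induction j with
    | zero => intro n; rfl
    | succ j ih =>
      intro n
      rw [add_comm j 1, gaussIter_add]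
      have : gaussIter (-1 / z (n + (1 + j))) 1 = -1 / z (n + j) := by
        rw [show n + (1 + j) = n + j + 1 by ring]
        simp only [gaussIter]
        rw [hyf, hys, sub_sub_cancel_left, div_neg, neg_div]
      rw [this, ih]
  refine ⟨?_, ?_⟩
  · rw [neg_div, one_div]; exact hx'.inv.neg
  · intro j
    have h1 : j + 1 ≤ p * (j + 1) := by nlinarith
    obtain ⟨n, hn⟩ := Nat.exists_eq_add_of_le h1
    have e0 : x' = z (n + 1 + j) := by
      have := hzpm (j + 1) 0
      rw [hn] at this
      rw [show n + 1 + j = 0 + (j + 1 + n) by ring, this]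
      rfl
    unfold cfTerm
    rw [e0, hyg, hyf, hcf, ← hA (-1 - j) (j + 1)]
    congr 1
    have : (p : ℤ) * (j + 1) = j + 1 + n := by exact_mod_cast hn
    rw [this]
    ring

theorem pure_iff {w x x' : ℝ} {D : ℤ} (hw : Irrational w) (hD : w ^ 2 = D)
    (h : QConj w x x') (hx1 : 1 < x) (A : ℤ → ℤ) (p : ℕ) (hp : 1 ≤ p)
    (hA : ∀ i t : ℤ, A (i + p * t) = A i) (hcf : ∀ j : ℕ, cfTerm x j = A j)
    {e : ℤ} (he : e = 1 ∨ e = -1) :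
    MobEq e x x' ↔ ∃ c : ℤ, (Odd c ↔ e = 1) ∧ ∀ i, A i = A (c - i) := by
  obtain ⟨hy, hycf⟩ := galois_reverse hw hD h hx1 A p hp hA hcf
  have hx := h.irr hw
  have hx' := h.irr' hw
  have e1 : MobEq e x x' ↔ MobEq e x (-1 / x') := by
    constructor
    · intro h1
      simpa using h1.trans (mobEq_neg_inv hx'.ne_zero).symm
    · intro h1
      simpa using h1.trans (mobEq_neg_inv hx'.ne_zero)
  rw [e1, mobEq_iff_tailEq hx hy he]
  set y := -1 / x'
  have e2 : ∀ (u : ℝ) (l j : ℕ), cfTerm (gaussIter u l) j = cfTerm u (l + j) := by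
    intro u l j; simp only [cfTerm, gaussIter_add]
  have hpz : (p : ℤ) ≠ 0 := by omega
  have par : ∀ (N M : ℕ) (c : ℤ), c = N - M - 1 →
      ((-1 : ℤ) ^ (N + M) = e ↔ (Odd c ↔ e = 1)) := by
    intro N M c hc
    rcases Nat.even_or_odd (N + M) with hE | hO
    · rw [hE.neg_one_pow]
      have : Odd c := by
        rw [Int.odd_iff]; rw [Nat.even_iff] at hE; omega
      simp only [this, true_iff]
      exact eq_comm
    · rw [hO.neg_one_pow]
      have : ¬ Odd c := by
        rw [Int.odd_iff]; rw [Nat.odd_iff] at hO; omega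
      simp only [this, false_iff]
      rcases he with h | h <;> rw [h] <;> norm_num
  constructor
  · rintro ⟨N, M, h1, h2⟩
    refine ⟨N - M - 1, (par N M _ rfl).mp h1, ?_⟩
    intro i
    have h3 : ∀ j : ℕ, A (N + j) = A (-1 - M - j) := by
      intro j
      have := e2 x N j
      rw [h2, e2, hcf, hycf] at this
      push_cast at this
      rw [← this]
      congr 1
      ring
    obtain ⟨j, hj⟩ := Int.eq_ofNat_of_zero_le (Int.emod_nonneg (i - N) hpz)
    have h4 := Int.mul_ediv_add_emod (i - N) p
    rw [hj] at h4
    set t := (i - N) / (p : ℤ)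
    have h5 : A i = A (N + j) := by
      rw [← hA (N + j) t]
      congr 1
      linarith
    rw [h5, h3, ← hA (N - M - 1 - i) t]
    congr 1
    linarith
  · rintro ⟨c, hc, hs⟩
    obtain ⟨N, M, hNM⟩ : ∃ N M : ℕ, c = N - M - 1 :=
      ⟨(c + 1).toNat, (-(c + 1)).toNat, by omega⟩
    refine ⟨N, M, (par N M c hNM).mpr hc, ?_⟩
    apply cf_inj (irr_gaussIter hx _) (irr_gaussIter hy _)
    intro j
    rw [e2, e2, hcf, hycf, hs]
    congr 1
    rw [hNM]
    push_cast
    ring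

theorem period_iff {w x x' : ℝ} {D : ℤ} (hw : Irrational w) (hD : w ^ 2 = D)
    (h : QConj w x x') (A : ℤ → ℤ) (p N : ℕ) (hp : 1 ≤ p)
    (hA : ∀ i t : ℤ, A (i + p * t) = A i) (hcf : ∀ j : ℕ, cfTerm x (N + j) = A j)
    {e : ℤ} (he : e = 1 ∨ e = -1) :
    MobEq e x x' ↔ ∃ c : ℤ, (Odd c ↔ e = 1) ∧ ∀ i, A i = A (c - i) := by
  have hx := h.irr hw
  have hc := cseq_conj hw hD h
  rw [← pure_iff hw hD (hc (N + p)) ?_ A p hp hA ?_ he]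
  · have h1 := mobEq_gauss hx (N + p)
    have h2 := mobEq_cseq (fun n => (hc n).irr' hw) (N + p)
    have hs : ((-1 : ℤ) ^ (N + p)) * (-1) ^ (N + p) = 1 := by
      rw [← mul_pow]; norm_num
    have hs2 : ((-1 : ℤ) ^ (N + p)) * e * (-1) ^ (N + p) = e := by
      linear_combination e * hs
    constructor
    · intro h3
      have := (h1.symm.trans h3).trans h2
      rwa [hs2] at this
    · intro h3
      have := (h1.trans h3).trans h2.symm
      rwa [hs2] at this
  · obtain ⟨q, rfl⟩ := Nat.exists_eq_add_of_le' hp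
    exact one_lt_gauss hx _
  · intro j
    have : cfTerm (gaussIter x (N + p)) j = cfTerm x (N + p + j) := by
      simp only [cfTerm, gaussIter_add]
    rw [this, add_assoc, hcf, ← hA j 1]
    congr 1
    push_cast
    ring

/-! ### Combinatorics of bipalindromic sequences -/

def perExt (s : List ℤ) (i : ℤ) : ℤ := s.getD (i % (s.length : ℤ)).toNat 0

theorem perExt_add (s : List ℤ) (i t : ℤ) : perExt s (i + s.length * t) = perExt s i := by
  simp only [perExt, Int.add_mul_emod_self_left]

theorem perExt_nat (s : List ℤ) (j : ℕ) : perExt s j = s.getD (j % s.length) 0 := by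
  simp only [perExt]
  congr 1

theorem perExt_emod (s : List ℤ) (i : ℤ) : perExt s (i % s.length) = perExt s i := by
  simp only [perExt, Int.emod_emod_of_dvd _ dvd_rfl]

theorem perExt_lt (s : List ℤ) (j : ℕ) (hj : j < s.length) : perExt s j = s[j] := by
  rw [perExt_nat, Nat.mod_eq_of_lt hj, List.getD_eq_getElem _ _ hj]

theorem perExt_rotate (s : List ℤ) (hs : s ≠ []) (r : ℕ) (i : ℤ) :
    perExt (s.rotate r) i = perExt s (i + r) := by
  have hl : 0 < s.length := List.length_pos_iff.mpr hs
  have hlz : (s.length : ℤ) ≠ 0 := by omega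
  obtain ⟨j, hj⟩ := Int.eq_ofNat_of_zero_le (Int.emod_nonneg i hlz)
  have hjl : j < s.length := by
    have := Int.emod_lt_of_pos i (by omega : 0 < (s.length : ℤ))
    omega
  have e1 : perExt (s.rotate r) i = perExt (s.rotate r) j := by
    rw [← perExt_emod, List.length_rotate, hj]
  have e2 : perExt s (i + r) = perExt s ((j + r : ℕ) : ℤ) := by
    rw [← perExt_emod, ← perExt_emod s ((j + r : ℕ) : ℤ)]
    push_cast
    rw [← hj, Int.emod_add_emod]
  rw [e1, e2, perExt_lt _ _ (by simpa using hjl), List.getElem_rotate, perExt_nat,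
    List.getD_eq_getElem _ _ (Nat.mod_lt _ hl)]

theorem bip_symm (u v : List ℤ) (hu : u.reverse = u) (hv : v.reverse = v) (hne : u ++ v ≠ [])
    (i : ℤ) : perExt (u ++ v) i = perExt (u ++ v) (u.length - 1 - i) := by
  have hl : 0 < (u ++ v).length := List.length_pos_iff.mpr hne
  have hlz : ((u ++ v).length : ℤ) ≠ 0 := by omega
  obtain ⟨j, hj⟩ := Int.eq_ofNat_of_zero_le (Int.emod_nonneg i hlz)
  have hjl : j < (u ++ v).length := by
    have := Int.emod_lt_of_pos i (by omega : 0 < ((u ++ v).length : ℤ))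
    omega
  have hdm := Int.mul_ediv_add_emod i (u ++ v).length
  rw [hj] at hdm
  have hlen : (u ++ v).length = u.length + v.length := List.length_append
  have e1 : perExt (u ++ v) i = perExt (u ++ v) j := by
    rw [← perExt_emod, hj]
  have e2 : ∀ t, perExt (u ++ v) (u.length - 1 - i) =
      perExt (u ++ v) (u.length - 1 - j + (u ++ v).length * t) := by
    intro t
    rw [perExt_add, ← perExt_add _ (u.length - 1 - i) (i / (u ++ v).length)]
    congr 1
    linarith
  rw [e1]
  by_cases hju : j < u.length
  · rw [e2 0, show (u.length : ℤ) - 1 - j + (u ++ v).length * 0 = ((u.length - 1 - j : ℕ) : ℤ) by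
      rw [mul_zero]; omega, perExt_lt _ _ hjl, perExt_lt _ _ (by omega),
      List.getElem_append_left hju, List.getElem_append_left (by omega)]
    have : u.reverse[j]'(by simpa using hju) = u[u.length - 1 - j] := List.getElem_reverse _
    rw [← this]
    simp only [hu]
  · rw [e2 1, show (u.length : ℤ) - 1 - j + (u ++ v).length * 1
        = ((u.length + (v.length - 1 - (j - u.length)) : ℕ) : ℤ) by
      rw [mul_one]; omega, perExt_lt _ _ hjl, perExt_lt _ _ (by omega),
      List.getElem_append_right (by omega), List.getElem_append_right (by omega)]
    have : v.reverse[j - u.length]'(by rw [List.length_reverse]; omega)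
        = v[v.length - 1 - (j - u.length)] := List.getElem_reverse _
    simp only [Nat.add_sub_cancel_left]
    rw [← this]
    simp only [hv]

theorem bip_iff (s : List ℤ) (hs : s ≠ [])
    (hmin : ∀ q : ℕ, 1 ≤ q → (∀ i : ℤ, perExt s (i + q) = perExt s i) → s.length ≤ q) :
    Bipalindromic s ↔ ((∃ c : ℤ, ¬ Odd c ∧ ∀ i, perExt s i = perExt s (c - i)) ∧
      ¬ ∃ c : ℤ, Odd c ∧ ∀ i, perExt s i = perExt s (c - i)) := by
  have hl : 0 < s.length := List.length_pos_iff.mpr hs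
  constructor
  · rintro ⟨u, v, ⟨r, hr⟩, hou, hov, hu, hv⟩
    have hlen : s.length = u.length + v.length := by
      rw [← List.length_append, ← hr, List.length_rotate]
    have hne : u ++ v ≠ [] := by
      intro h0
      rw [← List.length_append, h0] at hlen
      simp at hlen
      exact hs hlen
    have hB : ∀ i, perExt (u ++ v) i = perExt s (i + r) := by
      intro i; rw [← hr, perExt_rotate s hs]
    have hsym : ∀ i, perExt s i = perExt s ((2 * r + u.length - 1 : ℤ) - i) := by
      intro i
      have := bip_symm u v hu hv hne (i - r)
      rw [hB, hB] at this
      rw [sub_add_cancel] at this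
      rw [this]
      congr 1
      ring
    rw [Nat.odd_iff] at hou hov
    refine ⟨⟨_, ?_, hsym⟩, ?_⟩
    · rw [Int.odd_iff]; omega
    · rintro ⟨c, hc, hcs⟩
      rw [Int.odd_iff] at hc
      obtain ⟨g, hg⟩ : ∃ g : ℤ, g = c - (2 * r + u.length - 1) := ⟨_, rfl⟩
      have hper : ∀ i, perExt s (i + g) = perExt s i := by
        intro i
        rw [hcs (i + g), hsym i]
        congr 1
        rw [hg]
        ring
      have hlz : (s.length : ℤ) ≠ 0 := by omega
      obtain ⟨q, hq⟩ := Int.eq_ofNat_of_zero_le (Int.emod_nonneg g hlz)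
      have hql := Int.emod_lt_of_pos g (by omega : 0 < (s.length : ℤ))
      have hdm := Int.mul_ediv_add_emod g s.length
      rw [hq] at hdm hql
      have hperq : ∀ i : ℤ, perExt s (i + q) = perExt s i := by
        intro i
        rw [← hper i, ← perExt_add s (i + q) (g / s.length)]
        congr 1
        linarith
      have hq0 : q = 0 := by
        by_contra hq0
        have := hmin q (by omega) hperq
        omega
      obtain ⟨l, hl2⟩ : ∃ l : ℤ, (s.length : ℤ) = 2 * l := ⟨s.length / 2, by omega⟩
      rw [hl2, hq0, mul_assoc] at hdm
      generalize l * (g / (2 * l)) = z at hdm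
      omega
  · rintro ⟨⟨c, hc, hcs⟩, hno⟩
    have hpe : s.length % 2 = 0 := by
      by_contra hpo
      apply hno
      refine ⟨c + s.length, ?_, ?_⟩
      · rw [Int.odd_iff] at hc ⊢; omega
      · intro i
        rw [hcs, ← perExt_add s (c - i) 1]
        congr 1
        ring
    have hlz : (s.length : ℤ) ≠ 0 := by omega
    obtain ⟨h, hh⟩ : ∃ h : ℤ, c = 2 * h := ⟨c / 2, by rw [Int.odd_iff] at hc; omega⟩
    obtain ⟨r, hr⟩ := Int.eq_ofNat_of_zero_le (Int.emod_nonneg h hlz)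
    have hdm := Int.mul_ediv_add_emod h s.length
    rw [hr] at hdm
    have hB : ∀ i, perExt (s.rotate r) i = perExt (s.rotate r) (-i) := by
      intro i
      rw [perExt_rotate s hs, perExt_rotate s hs, hcs,
        ← perExt_add s (-i + r) (2 * (h / s.length))]
      congr 1
      rw [hh]
      linarith
    have hrl : (s.rotate r).length = s.length := List.length_rotate ..
    have hrot : List.IsRotated s (s.rotate r) := ⟨r, rfl⟩
    generalize s.rotate r = t at hB hrl hrot
    cases t with
    | nil => simp at hrl; omega
    | cons b v =>
      rw [List.length_cons] at hrl
      refine ⟨[b], v, by simpa using hrot, by simp, ?_, by simp, ?_⟩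
      · rw [Nat.odd_iff]; omega
      · apply List.ext_getElem (by simp)
        intro j h1 h2
        rw [List.getElem_reverse]
        have e1 : v[j] = perExt (b :: v) ((j + 1 : ℕ) : ℤ) := by
          rw [perExt_lt _ _ (by simpa using h2)]; simp
        have e2 : v[v.length - 1 - j] = perExt (b :: v) ((v.length - 1 - j + 1 : ℕ) : ℤ) := by
          rw [perExt_lt _ _ (by rw [List.length_cons]; omega)]; simp
        rw [e1, e2, hB ((j + 1 : ℕ) : ℤ), ← perExt_add _ (-((j + 1 : ℕ) : ℤ)) 1]
        congr 1
        rw [List.length_cons]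
        omega

/-- The period `Γ(m,n,k)` is bipalindromic iff the class `C(m,n,k)` is `k`-symmetric. -/
theorem statement6 (m n k : ℤ)
    (hpos : 0 < formDisc (m, n, k)) (hsq : ¬ IsSquare (formDisc (m, n, k))) :
    ∀ s : List ℤ, IsCFPeriod s (xiPlus (m, n, k)) →
      (Bipalindromic s ↔
        (SLEquiv (m, n, k) (conjF (m, n, k)) ∧ ¬ SLEquiv (m, n, k) (adjF (m, n, k)))) := by
  intro s hs
  obtain ⟨hne, ⟨N, hN⟩, hmin⟩ := hs
  have hl : 1 ≤ s.length := List.length_pos_iff.mpr hne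
  have hw := irr_w hpos hsq
  have hw2 : Real.sqrt (formDisc (m, n, k)) ^ 2 = (formDisc (m, n, k) : ℤ) :=
    Real.sq_sqrt (by exact_mod_cast hpos.le)
  have hc := xi_conj_pair hsq
  have hcf : ∀ j : ℕ, cfTerm (xiPlus (m, n, k)) (N + j) = perExt s j := by
    intro j
    rw [hN, perExt_nat]
  rw [conj_iff hpos hsq, adj_iff hpos hsq,
    period_iff hw hw2 hc (perExt s) s.length N hl (perExt_add s) hcf (Or.inr rfl),
    period_iff hw hw2 hc (perExt s) s.length N hl (perExt_add s) hcf (Or.inl rfl),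
    bip_iff s hne]
  · norm_num
  · intro q hq hper
    refine hmin q hq ⟨N, hq, ?_⟩
    intro j
    rw [add_assoc, hcf, hcf]
    push_cast
    exact hper j
end

section
/- Let f=(m,n,k) be an integer binary quadratic form with discriminant Δ=k²−4mn>0 not a perfect square. The period Γ(f) is non-palindromic and of odd length if and only if the class of f is antisymmetric, i.e., f is SL(2,ℤ)-equivalent to its antipodal (−n,−m,−k) but neither to its conjugate (m,n,−k) nor to its adjoint (−n,−m,k). -/
lemma gaussIter_add_s7 (ξ : ℝ) (i j : ℕ) : gaussIter ξ (i + j) = gaussIter (gaussIter ξ i) j := by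
  induction j with
  | zero => rfl
  | succ j ih =>
    rw [← Nat.add_assoc]
    simp only [gaussIter, ih]

lemma cfTerm_add (ξ : ℝ) (i j : ℕ) : cfTerm ξ (i + j) = cfTerm (gaussIter ξ i) j := by
  simp only [cfTerm, gaussIter_add_s7]

lemma floor_of_step {y w : ℝ} {q : ℤ} (hw : 1 < w) (h : y = q + 1 / w) : ⌊y⌋ = q := by
  rw [Int.floor_eq_iff]
  have h1 : 0 < 1 / w := by positivity
  have h2 : 1 / w < 1 := by rw [div_lt_one (by linarith)]; exact hw
  constructor <;> linarith

lemma gauss_of_step {y w : ℝ} {q : ℤ} (hw : 1 < w) (h : y = q + 1 / w) : gaussIter y 1 = w := by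
  have := floor_of_step hw h
  simp only [gaussIter, this]
  rw [h]; field_simp; ring

lemma gauss_succ_of_step {y w : ℝ} {q : ℤ} (hw : 1 < w) (h : y = q + 1 / w) (k : ℕ) :
    gaussIter y (k + 1) = gaussIter w k := by
  rw [Nat.add_comm, gaussIter_add_s7, gauss_of_step hw h]

/-- Uniqueness of continued fraction expansions. -/
lemma cf_unique (u v : ℕ → ℝ) (s : ℕ → ℤ) (hu : ∀ i, 1 < u i) (hv : ∀ i, 1 < v i)
    (hs : ∀ i, 1 ≤ s i) (hu' : ∀ i, u i = s i + 1 / u (i + 1))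
    (hv' : ∀ i, v i = s i + 1 / v (i + 1)) : u 0 = v 0 := by
  have key : ∀ n i, |u i - v i| ≤ (1 / 4 : ℝ) ^ n := by
    intro n
    induction n with
    | zero =>
      intro i
      have a1 : 0 < 1 / u (i + 1) := by have := hu (i + 1); positivity
      have a2 : 1 / u (i + 1) < 1 := by
        rw [div_lt_one (by linarith [hu (i + 1)])]; exact hu _
      have b1 : 0 < 1 / v (i + 1) := by have := hv (i + 1); positivity
      have b2 : 1 / v (i + 1) < 1 := by
        rw [div_lt_one (by linarith [hv (i + 1)])]; exact hv _
      rw [abs_le, hu' i, hv' i]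
      rw [pow_zero]
      constructor <;> linarith
    | succ n ih =>
      intro i
      have ih2 := ih (i + 2)
      have u1 := hu (i + 1)
      have u2 := hu (i + 2)
      have v1 := hv (i + 1)
      have v2 := hv (i + 2)
      have eu : u (i + 1) * u (i + 2) = s (i + 1) * u (i + 2) + 1 := by
        have := hu' (i + 1)
        rw [show i + 1 + 1 = i + 2 from rfl] at this
        rw [this]; field_simp
      have ev : v (i + 1) * v (i + 2) = s (i + 1) * v (i + 2) + 1 := by
        have := hv' (i + 1)
        rw [show i + 1 + 1 = i + 2 from rfl] at this
        rw [this]; field_simp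
      have hs1 : (1 : ℝ) ≤ s (i + 1) := by exact_mod_cast hs (i + 1)
      have U : 2 ≤ u (i + 1) * u (i + 2) := by rw [eu]; nlinarith
      have V : 2 ≤ v (i + 1) * v (i + 2) := by rw [ev]; nlinarith
      have e : (u i - v i) * ((u (i + 1) * u (i + 2)) * (v (i + 1) * v (i + 2)))
          = u (i + 2) - v (i + 2) := by
        have e1 : (u i - v i) * (u (i + 1) * v (i + 1)) = v (i + 1) - u (i + 1) := by
          rw [hu' i, hv' i]; field_simp; ring
        calc (u i - v i) * ((u (i + 1) * u (i + 2)) * (v (i + 1) * v (i + 2)))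
            = ((u i - v i) * (u (i + 1) * v (i + 1))) * (u (i + 2) * v (i + 2)) := by ring
          _ = (v (i + 1) * v (i + 2)) * u (i + 2) - (u (i + 1) * u (i + 2)) * v (i + 2) := by
            rw [e1]; ring
          _ = _ := by rw [eu, ev]; ring
      have ea : |u i - v i| * ((u (i + 1) * u (i + 2)) * (v (i + 1) * v (i + 2)))
          = |u (i + 2) - v (i + 2)| := by
        rw [← e, abs_mul, abs_of_pos (a := _ * _) (by positivity)]
      have W : 4 ≤ (u (i + 1) * u (i + 2)) * (v (i + 1) * v (i + 2)) := by nlinarith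
      have := abs_nonneg (u i - v i)
      rw [pow_succ]
      nlinarith
  have h0 : |u 0 - v 0| ≤ 0 := by
    refine ge_of_tendsto' (tendsto_pow_atTop_nhds_zero_of_lt_one (r := (1 / 4 : ℝ))
      (by norm_num) (by norm_num)) (fun n => key n 0)
  have := abs_nonpos_iff.mp h0
  linarith

/-- Basic facts for irrational numbers. -/
lemma irr_gauss {ξ : ℝ} (h : Irrational ξ) (n : ℕ) : Irrational (gaussIter ξ n) := by
  induction n with
  | zero => exact h
  | succ n ih =>
    simp only [gaussIter, one_div]
    exact (ih.sub_intCast _).inv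

lemma gauss_gt_one {ξ : ℝ} (h : Irrational ξ) (n : ℕ) : 1 < gaussIter ξ (n + 1) := by
  simp only [gaussIter]
  have h1 := irr_gauss h n
  have h2 : gaussIter ξ n - ⌊gaussIter ξ n⌋ ≠ 0 := (h1.sub_intCast _).ne_zero
  have h3 : 0 ≤ gaussIter ξ n - ⌊gaussIter ξ n⌋ := Int.fract_nonneg _
  have h4 : gaussIter ξ n - ⌊gaussIter ξ n⌋ < 1 := Int.fract_lt_one _
  rw [lt_div_iff₀ (lt_of_le_of_ne h3 h2.symm)]
  linarith

lemma cfTerm_pos {ξ : ℝ} (h : Irrational ξ) {n : ℕ} (hn : 1 ≤ n) : 1 ≤ cfTerm ξ n := by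
  obtain ⟨m, rfl⟩ := Nat.exists_eq_add_of_le' hn
  have := gauss_gt_one h m
  rw [cfTerm, Int.le_floor]
  push_cast; linarith

lemma gauss_step {ξ : ℝ} (h : Irrational ξ) (n : ℕ) :
    gaussIter ξ n = cfTerm ξ n + 1 / gaussIter ξ (n + 1) := by
  simp only [gaussIter, cfTerm]
  simp

/-- `u` is the image of `v` under an integer matrix of determinant `e`. -/
def MRel (u v : ℝ) (e : ℤ) : Prop :=
  ∃ a b c d : ℤ, a * d - b * c = e ∧ u * (c * v + d) = a * v + b

lemma MRel.symm {u v : ℝ} {e : ℤ} (h : MRel u v e) : MRel v u e := by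
  obtain ⟨a, b, c, d, h1, h2⟩ := h
  refine ⟨d, -b, -c, a, by linarith, ?_⟩
  push_cast
  linarith

lemma MRel.trans {u v w : ℝ} {e e' : ℤ} (h : MRel u v e) (h' : MRel v w e') :
    MRel u w (e * e') := by
  obtain ⟨a, b, c, d, h1, h2⟩ := h
  obtain ⟨a', b', c', d', h1', h2'⟩ := h'
  refine ⟨a * a' + b * c', a * b' + b * d', c * a' + d * c', c * b' + d * d', ?_, ?_⟩
  · rw [← h1, ← h1']; ring
  · push_cast
    linear_combination (c' * w + d') * h2 + (a - u * c) * h2'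

lemma MRel.refl (u : ℝ) : MRel u u 1 := ⟨1, 0, 0, 1, by norm_num, by push_cast; ring⟩

lemma mrel_step {u w : ℝ} {q : ℤ} (hw : w ≠ 0) (h : u = q + 1 / w) : MRel u w (-1) :=
  ⟨q, 1, 1, 0, by ring, by rw [h]; push_cast; field_simp; ring⟩

lemma mrel_gauss {ξ : ℝ} (h : Irrational ξ) (n : ℕ) : MRel ξ (gaussIter ξ n) ((-1) ^ n) := by
  induction n with
  | zero => exact MRel.refl _
  | succ n ih =>
    rw [pow_succ]
    exact ih.trans (mrel_step (irr_gauss h _).ne_zero (gauss_step h n))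

/-- Second half of Serret's theorem: `c > d > 0` and `x > 1`. -/
lemma serret_red (x : ℝ) (hx : 1 < x) : ∀ (D : ℕ) (y : ℝ) (a b c d : ℤ), d.toNat = D → 0 < d →
    d < c → (a * d - b * c = 1 ∨ a * d - b * c = -1) → y * (c * x + d) = a * x + b →
    ∃ k, gaussIter y k = x ∧ (-1 : ℤ) ^ k = a * d - b * c := by
  intro D
  induction D using Nat.strong_induction_on with
  | _ D ih =>
  intro y a b c d hD hd hdc hdet hy
  have hcR : (0 : ℝ) < c := by exact_mod_cast (by omega : 0 < c)
  have hdR : (0 : ℝ) < d := by exact_mod_cast hd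
  have hden : (0 : ℝ) < c * x + d := by positivity
  rcases (by omega : d = 1 ∨ 2 ≤ d) with h1 | h2
  · subst h1
    have hc2 : 2 ≤ c := by omega
    have hc2R : (2 : ℝ) ≤ c := by exact_mod_cast hc2
    push_cast at hy hden
    rcases hdet with hdet | hdet
    · have ha : a = b * c + 1 := by linarith
      have haR : (a : ℝ) = b * c + 1 := by exact_mod_cast ha
      have w1 : 1 < (c : ℝ) + 1 / x := by have : 0 < 1 / x := by positivity
                                          linarith
      have e1 : y = b + 1 / ((c : ℝ) + 1 / x) := by
        have : y = (a * x + b) / (c * x + 1) := by rw [eq_div_iff hden.ne']; exact hy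
        rw [this, haR]
        field_simp; ring
      refine ⟨2, ?_, by rw [hdet]; norm_num⟩
      rw [gauss_succ_of_step w1 e1, gauss_of_step hx rfl]
    · have ha : a = b * c - 1 := by linarith
      have haR : (a : ℝ) = b * c - 1 := by exact_mod_cast ha
      have hx1 : 0 < 1 / x := by positivity
      have w3 : 1 < ((c - 1 : ℤ) : ℝ) + 1 / x := by push_cast; linarith
      have w2 : 1 < ((1 : ℤ) : ℝ) + 1 / (((c - 1 : ℤ) : ℝ) + 1 / x) := by
        have : 0 < 1 / (((c - 1 : ℤ) : ℝ) + 1 / x) := by positivity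
        push_cast at this ⊢; linarith
      have e1 : y = ((b - 1 : ℤ) : ℝ) + 1 / (((1 : ℤ) : ℝ) + 1 / (((c - 1 : ℤ) : ℝ) + 1 / x)) := by
        have : y = (a * x + b) / (c * x + 1) := by rw [eq_div_iff hden.ne']; exact hy
        rw [this, haR]
        have g1 : (0 : ℝ) < (c - 1) * x + 1 := by nlinarith
        have g2 : (((c - 1 : ℤ) : ℝ) + 1 / x) = ((c - 1) * x + 1) / x := by
          push_cast; field_simp
        rw [g2]
        have g3 : ((1 : ℤ) : ℝ) + 1 / (((c - 1) * x + 1) / x) = (c * x + 1) / ((c - 1) * x + 1) := by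
          push_cast; field_simp; ring
        rw [g3]
        push_cast
        field_simp; ring
      refine ⟨3, ?_, by rw [hdet]; norm_num⟩
      rw [gauss_succ_of_step w2 e1, gauss_succ_of_step w3 rfl, gauss_of_step hx rfl]
  · obtain ⟨q, r, hr0, hrc, ha⟩ : ∃ q r : ℤ, 0 ≤ r ∧ r < c ∧ a = q * c + r :=
      ⟨a / c, a % c, Int.emod_nonneg _ (by omega), Int.emod_lt_of_pos _ (by omega), by
        have := Int.mul_ediv_add_emod a c; linarith [mul_comm c (a / c)]⟩
    obtain ⟨b', hb⟩ : ∃ b', b = q * d + b' := ⟨b - q * d, by ring⟩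
    have hdet' : r * d - b' * c = a * d - b * c := by rw [ha, hb]; ring
    have hr1 : 1 ≤ r := by
      by_contra hcon
      have : r = 0 := by omega
      subst this
      have : b' * c = 1 ∨ b' * c = -1 := by rcases hdet with h | h <;> [right; left] <;> linarith
      have hc : IsUnit c := by
        rcases this with h | h
        · exact IsUnit.of_mul_eq_one b' (by linarith)
        · exact IsUnit.of_mul_eq_one (-b') (by linarith)
      rcases Int.isUnit_iff.mp hc with h | h <;> omega
    have hb1 : 1 ≤ b' := by
      by_contra hcon
      have h3 : b' * c ≤ 0 := by nlinarith
      have h4 : 2 ≤ r * d := by nlinarith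
      rcases hdet with h | h <;> linarith
    have hbd : b' < d := by
      by_contra hcon
      push Not at hcon
      have : d * c ≤ b' * c := by nlinarith
      have : r * d ≤ (c - 1) * d := by nlinarith
      rcases hdet with h | h <;> nlinarith
    have hrR : (1 : ℝ) ≤ r := by exact_mod_cast hr1
    have hbR : (1 : ℝ) ≤ b' := by exact_mod_cast hb1
    have hrcR : (r : ℝ) < c := by exact_mod_cast hrc
    have hbdR : (b' : ℝ) < d := by exact_mod_cast hbd
    have hden' : (0 : ℝ) < r * x + b' := by positivity
    set w : ℝ := (c * x + d) / (r * x + b') with hw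
    have w1 : 1 < w := by rw [hw, lt_div_iff₀ hden']; nlinarith
    have e1 : y = q + 1 / w := by
      have : y = (a * x + b) / (c * x + d) := by rw [eq_div_iff hden.ne']; exact hy
      have haR : (a : ℝ) = q * c + r := by exact_mod_cast ha
      have hbR' : (b : ℝ) = q * d + b' := by exact_mod_cast hb
      rw [this, hw, haR, hbR']
      field_simp; ring
    by_cases hrb : b' < r
    · obtain ⟨k, hk, hk'⟩ := ih b'.toNat (by omega) w c d r b' rfl (by omega) hrb
        (by rcases hdet with h | h <;> [right; left] <;> linarith)
        (by rw [hw]; field_simp)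
      refine ⟨k + 1, by rw [gauss_succ_of_step w1 e1, hk], ?_⟩
      rw [pow_succ, hk']; linarith
    · push Not at hrb
      have h5 : r * c ≤ b' * c := by nlinarith
      have h6 : r * (d + 1) ≤ r * c := by nlinarith
      have h7 : r = 1 := by
        rcases hdet with h | h
        · nlinarith
        · nlinarith
      subst h7
      have h8 : a * d - b * c = -1 := by
        rcases hdet with h | h
        · linarith
        · exact h
      have h9 : b' * c = d + 1 := by linarith
      have h10 : b' = 1 := by nlinarith
      subst h10
      have h11 : (c : ℝ) = d + 1 := by exact_mod_cast (by linarith : c = d + 1)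
      have w2 : 1 < ((1 : ℤ) : ℝ) + 1 / x := by
        have : 0 < 1 / x := by positivity
        push_cast; linarith
      have e2 : w = d + 1 / (((1 : ℤ) : ℝ) + 1 / x) := by
        rw [hw, h11]; push_cast; field_simp; ring
      refine ⟨3, ?_, by rw [h8]; norm_num⟩
      rw [gauss_succ_of_step w1 e1, gauss_succ_of_step w2 e2, gauss_of_step hx rfl]

/-- Data for the first half of Serret's theorem. -/
def SR (x y : ℝ) (E : ℤ) (i : ℕ) (a b c d : ℤ) : Prop :=
  (a * d - b * c) * (-1) ^ i = E ∧ y * (c * gaussIter x i + d) = a * gaussIter x i + b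

def SGood (x y : ℝ) (E : ℤ) : Prop :=
  ∃ (i : ℕ) (a b c d : ℤ), 1 ≤ i ∧ SR x y E i a b c d ∧ 0 < d ∧ d < c

lemma SR.neg {x y : ℝ} {E : ℤ} {i : ℕ} {a b c d : ℤ} (h : SR x y E i a b c d) :
    SR x y E i (-a) (-b) (-c) (-d) := by
  obtain ⟨h1, h2⟩ := h
  refine ⟨by rw [← h1]; ring, ?_⟩
  push_cast; linarith

lemma SR.step {x y : ℝ} (hx : Irrational x) {E : ℤ} {i : ℕ} {a b c d : ℤ}
    (h : SR x y E i a b c d) :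
    SR x y E (i + 1) (a * cfTerm x i + b) a (c * cfTerm x i + d) c := by
  obtain ⟨h1, h2⟩ := h
  refine ⟨by rw [← h1]; ring, ?_⟩
  have h3 := gauss_step hx i
  have h4 := (irr_gauss hx (i + 1)).ne_zero
  have h5 : gaussIter x i * gaussIter x (i + 1) = cfTerm x i * gaussIter x (i + 1) + 1 := by
    rw [h3]; field_simp
  push_cast
  linear_combination gaussIter x (i + 1) * h2 + (a - y * c) * h5

lemma sgood_of_pos {x y : ℝ} (hx : Irrational x) {E : ℤ} {i : ℕ} (hi : 1 ≤ i) {a b c d : ℤ}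
    (h : SR x y E i a b c d) (hc : 0 < c) (hd : 0 < d) : SGood x y E := by
  have hs := cfTerm_pos hx hi
  exact ⟨i + 1, _, _, _, _, by omega, h.step hx, hc, by nlinarith⟩

lemma sgood_of_nonneg {x y : ℝ} (hx : Irrational x) {E : ℤ} {i : ℕ} (hi : 1 ≤ i) {a b c d : ℤ}
    (h : SR x y E i a b c d) (hc : 0 < c) (hd : 0 ≤ d) : SGood x y E := by
  have hs := cfTerm_pos hx hi
  exact sgood_of_pos hx (by omega) (h.step hx) (by nlinarith) hc

lemma sgood_of_zero {x y : ℝ} (hx : Irrational x) {E : ℤ} {i : ℕ} (hi : 1 ≤ i) {a b d : ℤ}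
    (h : SR x y E i a b 0 d) (hd : d ≠ 0) : SGood x y E := by
  rcases lt_or_gt_of_ne hd with h0 | h0
  · exact sgood_of_nonneg hx (by omega) (h.neg.step hx) (by simpa using h0) (by simp)
  · exact sgood_of_nonneg hx (by omega) (h.step hx) (by simpa using h0) (by simp)

lemma sgood_main {x y : ℝ} (hx : Irrational x) {E : ℤ} : ∀ (C : ℕ) (i : ℕ) (a b c d : ℤ),
    c.toNat = C → 1 ≤ i → 0 < c → SR x y E i a b c d → SGood x y E := by
  intro C
  induction C using Nat.strong_induction_on with
  | _ C ih =>
  intro i a b c d hC hi hc h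
  by_cases hd : 0 ≤ d
  · exact sgood_of_nonneg hx hi h hc hd
  push Not at hd
  have h1 := h.step hx
  set s := cfTerm x i with hs
  rcases lt_trichotomy (c * s + d) 0 with h0 | h0 | h0
  · by_cases hlt : -(c * s + d) < c
    · exact ih (-(c * s + d)).toNat (by omega) (i + 1) _ _ _ _ rfl (by omega) (by omega) h1.neg
    · push Not at hlt
      have h2 := h1.neg.step hx
      have hs' := cfTerm_pos hx (n := i + 1) (by omega)
      set s' := cfTerm x (i + 1) with hs'
      have h3 : 0 ≤ -(c * s + d) * s' + -c := by nlinarith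
      rcases h3.lt_or_eq with h4 | h4
      · exact sgood_of_nonneg hx (by omega) h2 h4 (by omega)
      · rw [← h4] at h2
        exact sgood_of_zero hx (by omega) h2 (by omega)
  · rw [h0] at h1
    exact sgood_of_zero hx (by omega) h1 (by omega)
  · exact sgood_of_nonneg hx (by omega) h1 h0 (by omega)

/-- Serret's theorem with tracking of determinants. -/
lemma serret {x y : ℝ} (hx : Irrational x) {e : ℤ} (he : e = 1 ∨ e = -1) (h : MRel y x e) :
    ∃ k n, gaussIter y k = gaussIter x n ∧ (-1 : ℤ) ^ (k + n) = e := by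
  have hg : SGood x y e := by
    obtain ⟨a, b, c, d, h1, h2⟩ := h
    have h0 : SR x y e 0 a b c d := ⟨by simpa using h1, h2⟩
    have h3 := h0.step hx
    rw [zero_add] at h3
    rcases lt_trichotomy (c * cfTerm x 0 + d) 0 with hc | hc | hc
    · exact sgood_main hx _ 1 _ _ _ _ rfl le_rfl (by omega) h3.neg
    · have h4 := h3
      rw [hc] at h3
      refine sgood_of_zero hx le_rfl h3 ?_
      rintro rfl
      have : d = 0 := by simpa using hc
      subst this
      rcases he with he | he <;> omega
    · exact sgood_main hx _ 1 _ _ _ _ rfl le_rfl (by omega) h3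
  obtain ⟨i, a, b, c, d, hi, ⟨h1, h2⟩, hd, hdc⟩ := hg
  have hsq : ((-1 : ℤ) ^ i) * (-1) ^ i = 1 := by rw [← mul_pow]; simp
  have hdet : a * d - b * c = e * (-1) ^ i := by
    rw [← h1, mul_assoc, hsq, mul_one]
  have hdet' : a * d - b * c = 1 ∨ a * d - b * c = -1 := by
    rw [hdet]
    rcases neg_one_pow_eq_or ℤ i with h | h <;> rcases he with h' | h' <;> rw [h, h'] <;> simp
  obtain ⟨j, rfl⟩ := Nat.exists_eq_add_of_le' hi
  obtain ⟨k, hk, hk'⟩ := serret_red _ (gauss_gt_one hx j) _ y a b c d rfl hd hdc hdet' h2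
  refine ⟨k, j + 1, hk, ?_⟩
  rw [pow_add, hk', h1]

/-- `u`, `v` are conjugate irrational elements of `ℚ(S)`. -/
def CPair (S u v : ℝ) : Prop := ∃ r t : ℚ, t ≠ 0 ∧ u = r + t * S ∧ v = r - t * S

lemma CPair.symm {S u v : ℝ} (h : CPair S u v) : CPair S v u := by
  obtain ⟨r, t, ht, h1, h2⟩ := h
  exact ⟨r, -t, by simpa using ht, by rw [h2]; push_cast; ring, by rw [h1]; push_cast; ring⟩

lemma CPair.irr {S u v : ℝ} (hS : Irrational S) (h : CPair S u v) : Irrational u := by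
  obtain ⟨r, t, ht, h1, h2⟩ := h
  rw [h1]
  exact (hS.ratCast_mul ht).ratCast_add r

lemma CPair.ne {S u v : ℝ} (hS : Irrational S) (h : CPair S u v) : u ≠ v := by
  obtain ⟨r, t, ht, h1, h2⟩ := h
  intro h
  have h3 : (t : ℝ) * S = 0 := by linarith
  exact (hS.ratCast_mul ht).ne_zero h3

lemma CPair.unique {S u v v' : ℝ} (hS : Irrational S) (h : CPair S u v) (h' : CPair S u v') :
    v = v' := by
  obtain ⟨r, t, ht, h1, h2⟩ := h
  obtain ⟨r', t', ht', h1', h2'⟩ := h'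
  by_cases htt : t = t'
  · subst htt
    linarith
  · exfalso
    have h3 : ((r - r' : ℚ) : ℝ) + ((t - t' : ℚ) : ℝ) * S = 0 := by push_cast; linarith
    exact ((hS.ratCast_mul (sub_ne_zero.mpr htt)).ratCast_add (r - r')).ne_zero h3

lemma CPair.step {S u v : ℝ} {D : ℤ} (hS : Irrational S) (hD : S ^ 2 = D) (h : CPair S u v)
    (q : ℤ) : CPair S (1 / (u - q)) (1 / (v - q)) := by
  have hu := ((h.irr hS).sub_intCast q).ne_zero
  have hv := ((h.symm.irr hS).sub_intCast q).ne_zero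
  obtain ⟨r, t, ht, h1, h2⟩ := h
  have hn : (((r - q) ^ 2 - t ^ 2 * D : ℚ) : ℝ) = (u - q) * (v - q) := by
    push_cast; rw [h1, h2, ← hD]; ring
  have hn0 : ((r - q) ^ 2 - t ^ 2 * D : ℚ) ≠ 0 := by
    intro h0
    rw [h0] at hn
    exact mul_ne_zero hu hv (by simpa using hn.symm)
  refine ⟨(r - q) / ((r - q) ^ 2 - t ^ 2 * D), -t / ((r - q) ^ 2 - t ^ 2 * D),
    div_ne_zero (neg_ne_zero.mpr ht) hn0, ?_, ?_⟩
  · rw [Rat.cast_div, Rat.cast_div, hn]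
    push_cast
    field_simp
    rw [h2]; ring
  · rw [Rat.cast_div, Rat.cast_div, hn]
    push_cast
    field_simp
    rw [h1]; ring

/-- The conjugates of the complete quotients. -/
noncomputable def zIter (ξ z : ℝ) : ℕ → ℝ
  | 0 => z
  | n + 1 => 1 / (zIter ξ z n - (cfTerm ξ n : ℝ))

lemma cpair_iter {S ξ z : ℝ} {D : ℤ} (hS : Irrational S) (hD : S ^ 2 = D) (h : CPair S ξ z)
    (n : ℕ) : CPair S (gaussIter ξ n) (zIter ξ z n) := by
  induction n with
  | zero => exact h
  | succ n ih => exact ih.step hS hD _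

lemma z_step {S ξ z : ℝ} {D : ℤ} (hS : Irrational S) (hD : S ^ 2 = D) (h : CPair S ξ z)
    (n : ℕ) : zIter ξ z n = cfTerm ξ n + 1 / zIter ξ z (n + 1) := by
  simp [zIter]

lemma mrel_z {S ξ z : ℝ} {D : ℤ} (hS : Irrational S) (hD : S ^ 2 = D) (h : CPair S ξ z)
    (n : ℕ) : MRel z (zIter ξ z n) ((-1) ^ n) := by
  induction n with
  | zero => exact MRel.refl _
  | succ n ih =>
    rw [pow_succ]
    exact ih.trans (mrel_step ((cpair_iter hS hD h _).symm.irr hS).ne_zero (z_step hS hD h n))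

lemma z_neg {S ξ z : ℝ} {D : ℤ} (hS : Irrational S) (hD : S ^ 2 = D) (h : CPair S ξ z) :
    ∃ i0, 1 ≤ i0 ∧ ∀ i, i0 ≤ i → -1 < zIter ξ z i ∧ zIter ξ z i < 0 := by
  have hξ := h.irr hS
  have hst : ∀ i, 1 ≤ i → zIter ξ z i < 0 → -1 < zIter ξ z (i + 1) ∧ zIter ξ z (i + 1) < 0 := by
    intro i hi h0
    have h1 : (1 : ℝ) ≤ cfTerm ξ i := by exact_mod_cast cfTerm_pos hξ hi
    have h2 : zIter ξ z i - cfTerm ξ i < -1 := by linarith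
    simp only [zIter]
    constructor
    · rw [lt_div_iff_of_neg (by linarith)]; linarith
    · exact div_neg_of_pos_of_neg one_pos (by linarith)
  by_cases hex : ∃ i, 1 ≤ i ∧ zIter ξ z i < 0
  · obtain ⟨i, hi, h0⟩ := hex
    refine ⟨i + 1, by omega, fun j hj => ?_⟩
    induction j, hj using Nat.le_induction with
    | base => exact hst i hi h0
    | succ j hj ih => exact hst j (by omega) ih.2
  · exfalso
    push Not at hex
    have hpos : ∀ i, 1 ≤ i → 0 < zIter ξ z i := fun i hi =>
      lt_of_le_of_ne (hex i hi) ((cpair_iter hS hD h i).symm.irr hS).ne_zero.symm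
    have hgt : ∀ i, 1 ≤ i → 1 < zIter ξ z i := by
      intro i hi
      have h1 : (1 : ℝ) ≤ cfTerm ξ i := by exact_mod_cast cfTerm_pos hξ hi
      have h2 : 0 < 1 / zIter ξ z (i + 1) := by have := hpos (i + 1) (by omega); positivity
      rw [z_step hS hD h i]; linarith
    have := cf_unique (fun i => gaussIter ξ (i + 1)) (fun i => zIter ξ z (i + 1))
      (fun i => cfTerm ξ (i + 1)) (fun i => gauss_gt_one hξ i) (fun i => hgt _ (by omega))
      (fun i => cfTerm_pos hξ (by omega)) (fun i => gauss_step hξ _) (fun i => z_step hS hD h _)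
    exact (cpair_iter hS hD h 1).ne hS this

lemma cf_unique' {x y : ℝ} (hx : Irrational x) (hy : Irrational y) (hx1 : 1 < x) (hy1 : 1 < y)
    (h : ∀ j, cfTerm x j = cfTerm y j) : x = y := by
  refine cf_unique (gaussIter x) (gaussIter y) (cfTerm x) ?_ ?_ ?_ (gauss_step hx) ?_
  · rintro (_ | i)
    · exact hx1
    · exact gauss_gt_one hx i
  · rintro (_ | i)
    · exact hy1
    · exact gauss_gt_one hy i
  · rintro (_ | i)
    · rw [cfTerm, Int.le_floor]
      simp only [gaussIter]; push_cast; linarith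
    · exact cfTerm_pos hx (by omega)
  · intro i; rw [h]; exact gauss_step hy i

/-- Periodic extension of a list. -/
def sig (s : List ℤ) (i : ℤ) : ℤ := s.getD ((i % (s.length : ℤ)).toNat) 0

lemma sig_congr (s : List ℤ) {i j q : ℤ} (h : i = j + s.length * q) : sig s i = sig s j := by
  simp [sig, h]

lemma sig_nat (s : List ℤ) (i : ℕ) : sig s i = s.getD (i % s.length) 0 := by
  simp only [sig]
  congr 1

lemma sig_rotate (s : List ℤ) (r j : ℕ) (hj : j < (s.rotate r).length) :
    (s.rotate r)[j] = sig s (r + j) := by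
  have hj' : j < s.length := by simpa using hj
  rw [List.getElem_rotate]
  rw [show ((r : ℤ) + j) = ((j + r : ℕ) : ℤ) by push_cast; ring, sig_nat]
  rw [List.getD_eq_getElem _ _ (Nat.mod_lt _ (by omega))]

lemma pal_of_refl (s : List ℤ) (hL : Odd s.length) (c : ℤ)
    (h : ∀ i : ℤ, sig s i = sig s (c - i)) : Palindromic s := by
  obtain ⟨l, hl⟩ := hL
  obtain ⟨r, q, hr⟩ : ∃ (r : ℕ) (q : ℤ), c + 1 - 2 * (r : ℤ) = s.length * q := by
    have h0 : (s.length : ℤ) ≠ 0 := by omega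
    have hnn := Int.emod_nonneg ((c + 1) * (l + 1)) h0
    refine ⟨(((c + 1) * (l + 1)) % (s.length : ℤ)).toNat,
      2 * (((c + 1) * (l + 1)) / (s.length : ℤ)) - (c + 1), ?_⟩
    rw [Int.toNat_of_nonneg hnn]
    have h1 := Int.mul_ediv_add_emod ((c + 1) * (l + 1)) (s.length : ℤ)
    have h2 : (s.length : ℤ) = 2 * l + 1 := by exact_mod_cast hl
    set Q := ((c + 1) * (l + 1)) / (s.length : ℤ)
    set R := ((c + 1) * (l + 1)) % (s.length : ℤ)
    linear_combination (-2) * h1 + (c + 1) * h2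
  refine ⟨s.rotate r, ⟨r, rfl⟩, ?_⟩
  apply List.ext_getElem (by simp)
  intro j h1 h2
  have h3 : j < s.length := by simpa using h2
  rw [List.getElem_reverse, sig_rotate, sig_rotate, h]
  apply sig_congr s (q := q - 1)
  simp only [List.length_rotate]
  push_cast [Nat.cast_sub (by omega : j ≤ s.length - 1), Nat.cast_sub (by omega : 1 ≤ s.length)]
  linarith

lemma refl_of_pal (s : List ℤ) (hs : s ≠ []) (h : Palindromic s) :
    ∃ r : ℕ, ∀ i : ℤ, sig s (r + i) = sig s (r - 1 - i) := by
  obtain ⟨t, ⟨r, rfl⟩, ht⟩ := h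
  have hL : 0 < s.length := List.length_pos_iff.mpr hs
  refine ⟨r, fun i => ?_⟩
  obtain ⟨j, q, hj, hi⟩ : ∃ (j : ℕ) (q : ℤ), j < s.length ∧ i = j + s.length * q := by
    have h0 : (s.length : ℤ) ≠ 0 := by omega
    have hnn := Int.emod_nonneg i h0
    have hlt := Int.emod_lt_of_pos i (by omega : (0 : ℤ) < s.length)
    refine ⟨(i % s.length).toNat, i / s.length, by omega, ?_⟩
    rw [Int.toNat_of_nonneg hnn]
    have := Int.mul_ediv_add_emod i s.length
    linarith
  have hj1 : j < (s.rotate r).length := by simpa using hj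
  have hj2 : j < (s.rotate r).reverse.length := by simpa using hj
  have e1 : (s.rotate r).reverse[j] = (s.rotate r)[j] := by simp only [ht]
  rw [List.getElem_reverse, sig_rotate, sig_rotate] at e1
  rw [sig_congr s (j := r + j) (q := q) (by rw [hi]; ring), ← e1]
  apply sig_congr s (q := q + 1)
  simp only [List.length_rotate]
  push_cast [Nat.cast_sub (by omega : j ≤ s.length - 1), Nat.cast_sub (by omega : 1 ≤ s.length)]
  rw [hi]; ring

/-- Integer matrices of determinant `e` multiplying the form by `l`. -/
def FAut (m n k e l : ℤ) : Prop := ∃ a b c d : ℤ, a * d - b * c = e ∧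
  m * a ^ 2 + n * c ^ 2 + k * a * c = l * m ∧
  m * b ^ 2 + n * d ^ 2 + k * b * d = l * n ∧
  2 * m * a * b + 2 * n * c * d + k * (a * d + b * c) = l * k

lemma slequiv_iff (m n k m' n' k' : ℤ) : SLEquiv (m, n, k) (m', n', k') ↔
    ∃ a b c d : ℤ, a * d - b * c = 1 ∧
  m * a ^ 2 + n * c ^ 2 + k * a * c = m' ∧
  m * b ^ 2 + n * d ^ 2 + k * b * d = n' ∧
  2 * m * a * b + 2 * n * c * d + k * (a * d + b * c) = k' := by
  constructor
  · rintro ⟨a, b, c, d, h, hq⟩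
    have h10 := hq 1 0
    have h01 := hq 0 1
    have h11 := hq 1 1
    simp only [qval] at h10 h01 h11
    refine ⟨a, b, c, d, h, ?_, ?_, ?_⟩
    · linear_combination -h10
    · linear_combination -h01
    · linear_combination h10 + h01 - h11
  · rintro ⟨a, b, c, d, h, h1, h2, h3⟩
    refine ⟨a, b, c, d, h, fun x y => ?_⟩
    simp only [qval]
    rw [← h1, ← h2, ← h3]; ring

lemma antip_iff (m n k : ℤ) : SLEquiv (m, n, k) (antipF (m, n, k)) ↔ FAut m n k (-1) (-1) := by
  rw [antipF, slequiv_iff]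
  constructor
  · rintro ⟨a, b, c, d, h, h1, h2, h3⟩
    exact ⟨b, a, d, c, by linarith, by linarith, by linarith, by linarith⟩
  · rintro ⟨a, b, c, d, h, h1, h2, h3⟩
    exact ⟨b, a, d, c, by linarith, by linarith, by linarith, by linarith⟩

lemma adj_iff_s7 (m n k : ℤ) : SLEquiv (m, n, k) (adjF (m, n, k)) ↔ FAut m n k 1 (-1) := by
  rw [adjF, slequiv_iff]
  constructor
  · rintro ⟨a, b, c, d, h, h1, h2, h3⟩
    exact ⟨b, -a, d, -c, by linarith, by linarith, by linarith, by linarith⟩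
  · rintro ⟨a, b, c, d, h, h1, h2, h3⟩
    exact ⟨-b, a, -d, c, by linarith, by linarith, by linarith, by linarith⟩

lemma conj_iff_s7 (m n k : ℤ) : SLEquiv (m, n, k) (conjF (m, n, k)) ↔ FAut m n k (-1) 1 := by
  rw [conjF, slequiv_iff]
  constructor
  · rintro ⟨a, b, c, d, h, h1, h2, h3⟩
    exact ⟨a, -b, c, -d, by linarith, by linarith, by linarith, by linarith⟩
  · rintro ⟨a, b, c, d, h, h1, h2, h3⟩
    exact ⟨a, -b, c, -d, by linarith, by linarith, by linarith, by linarith⟩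

lemma irr_indep {x : ℝ} (hx : Irrational x) {p q : ℤ} (h : (p : ℝ) * x + q = 0) :
    p = 0 ∧ q = 0 := by
  have hp : p = 0 := by
    by_contra hp
    exact ((hx.intCast_mul hp).add_intCast q).ne_zero h
  subst hp
  exact ⟨rfl, by simpa using h⟩

lemma fix_iff {m n k : ℤ} (hm : m ≠ 0) {x : ℝ} (hx : Irrational x)
    (hr : m * x ^ 2 + k * x + n = 0) {e : ℤ} (he : e = 1 ∨ e = -1) :
    FAut m n k e e ↔ MRel x x e := by
  have hmR : (m : ℝ) ≠ 0 := by exact_mod_cast hm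
  constructor
  · rintro ⟨a, b, c, d, h, h1, h2, h3⟩
    refine ⟨a, b, c, d, h, ?_⟩
    have e1 : e * (m * (d - a)) = e * (k * c) := by
      have : (2 * m * a + k * c) * e = e * (2 * d * m - c * k) := by
        linear_combination (-(2 * m * a + k * c)) * h + 2 * d * h1 - c * h3
      linarith
    have e2 : e * (m * b) = e * (-(n * c)) := by
      have : (2 * m * b + k * d) * e = e * (d * k - 2 * c * n) := by
        linear_combination (-(2 * m * b + k * d)) * h + d * h3 - 2 * c * h2
      linarith
    have he0 : e ≠ 0 := by rcases he with h | h <;> omega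
    have e1 := mul_left_cancel₀ he0 e1
    have e2 := mul_left_cancel₀ he0 e2
    have e1R : (m : ℝ) * (d - a) = k * c := by exact_mod_cast e1
    have e2R : (m : ℝ) * b = -(n * c) := by exact_mod_cast e2
    apply mul_left_cancel₀ hmR
    linear_combination c * hr + x * e1R - e2R
  · rintro ⟨a, b, c, d, h, hM⟩
    obtain ⟨e1, e2⟩ := irr_indep hx (p := (d - a) * m - c * k) (q := -(c * n + b * m)) (by
      push_cast
      linear_combination m * hM - c * hr)
    have e3 : n * (d - a) = -(k * b) := by
      apply mul_left_cancel₀ hm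
      linear_combination n * e1 - k * e2
    refine ⟨a, b, c, d, h, ?_, ?_, ?_⟩
    · linear_combination m * h - a * e1 - c * e2
    · linear_combination n * h - b * e2 + d * e3
    · linear_combination k * h - 2 * d * e2 - 2 * b * e1

lemma swap_iff {m n k : ℤ} (hm : m ≠ 0) {x z : ℝ} (hx : Irrational x)
    (hs : m * (x + z) = -k) (hp : m * (x * z) = n) {e : ℤ} (he : e = 1 ∨ e = -1) :
    FAut m n k e (-e) ↔ MRel z x e := by
  have hmR : (m : ℝ) ≠ 0 := by exact_mod_cast hm
  constructor
  · rintro ⟨a, b, c, d, h, h1, h2, h3⟩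
    refine ⟨a, b, c, d, h, ?_⟩
    have he0 : e ≠ 0 := by rcases he with h | h <;> omega
    have e1 : a + d = 0 := by
      have : (2 * m * a + k * c) * e = -e * (2 * d * m - c * k) := by
        linear_combination (-(2 * m * a + k * c)) * h + 2 * d * h1 - c * h3
      apply mul_left_cancel₀ he0
      apply mul_left_cancel₀ hm
      linarith
    have e2 : m * b + k * d - c * n = 0 := by
      have : (2 * m * b + k * d) * e = -e * (d * k - 2 * c * n) := by
        linear_combination (-(2 * m * b + k * d)) * h + d * h3 - 2 * c * h2
      apply mul_left_cancel₀ he0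
      linarith
    have e1R : (a : ℝ) + d = 0 := by exact_mod_cast e1
    have e2R : (m : ℝ) * b + k * d - c * n = 0 := by exact_mod_cast e2
    apply mul_left_cancel₀ hmR
    linear_combination c * hp + d * hs - m * x * e1R - e2R
  · rintro ⟨a, b, c, d, h, hM⟩
    obtain ⟨e1, e2⟩ := irr_indep hx (p := (a + d) * m) (q := b * m + d * k - c * n) (by
      push_cast
      linear_combination (-m) * hM + c * hp + d * hs)
    have e3 : a = -d := by
      rcases mul_eq_zero.mp e1 with h | h
      · omega
      · exact absurd h hm
    subst e3
    refine ⟨-d, b, c, d, h, ?_, ?_, ?_⟩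
    · linear_combination (-m) * h - c * e2
    · linear_combination (-n) * h + b * e2
    · linear_combination (-k) * h - 2 * d * e2

lemma core {S ξ z : ℝ} {D : ℤ} (hS : Irrational S) (hD : S ^ 2 = D) (h : CPair S ξ z)
    {s : List ℤ} (hp : IsCFPeriod s ξ) : ∃ K : ℕ, 1 ≤ K ∧
      (∀ j : ℕ, cfTerm ξ (K + j) = sig s j) ∧
      gaussIter ξ (K + s.length) = gaussIter ξ K ∧
      ∀ r : ℕ, 1 < -1 / zIter ξ z (K + r) ∧
        ∀ j : ℕ, cfTerm (-1 / zIter ξ z (K + r)) j = sig s (r - 1 - j) := by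
  obtain ⟨hs, ⟨N, hN⟩, -⟩ := hp
  have hξ := h.irr hS
  have hL : 0 < s.length := List.length_pos_iff.mpr hs
  obtain ⟨i0, hi0, hz⟩ := z_neg hS hD h
  set K := N + s.length * i0 with hK
  have hKi : i0 ≤ K := by rw [hK]; nlinarith
  have hterm : ∀ j : ℕ, cfTerm ξ (K + j) = sig s j := by
    intro j
    rw [hK, Nat.add_assoc, hN, sig_nat]
    congr 1
    rw [Nat.add_comm, Nat.add_mul_mod_self_left]
  clear_value K
  have hper : ∀ r, gaussIter ξ (K + r + s.length) = gaussIter ξ (K + r) := by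
    intro r
    obtain ⟨K', hK'⟩ := Nat.exists_eq_add_of_le' (by omega : 1 ≤ K)
    apply cf_unique' (irr_gauss hξ _) (irr_gauss hξ _)
    · rw [hK', show K' + 1 + r + s.length = K' + r + s.length + 1 by ring]
      exact gauss_gt_one hξ _
    · rw [hK', show K' + 1 + r = K' + r + 1 by ring]
      exact gauss_gt_one hξ _
    · intro j
      rw [← cfTerm_add, ← cfTerm_add, show K + r + s.length + j = K + (r + s.length + j) by ring,
        Nat.add_assoc K r j, hterm, hterm]
      apply sig_congr s (q := 1)
      push_cast; ring
  have hzper : ∀ r T, zIter ξ z (K + r + s.length * T) = zIter ξ z (K + r) := by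
    intro r T
    induction T with
    | zero => simp
    | succ T ih =>
      rw [← ih]
      have h1 := cpair_iter hS hD h (K + r + s.length * (T + 1))
      have h2 := cpair_iter hS hD h (K + r + s.length * T)
      have h3 : gaussIter ξ (K + r + s.length * (T + 1)) = gaussIter ξ (K + r + s.length * T) := by
        have := hper (r + s.length * T)
        rw [show K + r + s.length * (T + 1) = K + (r + s.length * T) + s.length by ring, this,
          Nat.add_assoc]
      rw [h3] at h1
      exact h1.unique hS h2
  have hy1 : ∀ i, K ≤ i → 1 < -1 / zIter ξ z i := by
    intro i hi
    obtain ⟨h1, h2⟩ := hz i (by omega)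
    rw [lt_div_iff_of_neg h2]; linarith
  have hystep : ∀ i, K ≤ i → -1 / zIter ξ z (i + 1) = cfTerm ξ i + 1 / (-1 / zIter ξ z i) := by
    intro i hi
    obtain ⟨h1, h2⟩ := hz i (by omega)
    have := z_step hS hD h i
    have e : 1 / zIter ξ z (i + 1) = zIter ξ z i - cfTerm ξ i := by linarith
    have e' : -1 / zIter ξ z (i + 1) = -(1 / zIter ξ z (i + 1)) := by ring
    rw [e', e]
    field_simp; ring
  have hyg : ∀ i, K ≤ i → ∀ j, gaussIter (-1 / zIter ξ z (i + j)) j = -1 / zIter ξ z i := by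
    intro i hi j
    induction j with
    | zero => rfl
    | succ j ih =>
      rw [← Nat.add_assoc, gauss_succ_of_step (hy1 (i + j) (by omega)) (hystep (i + j) (by omega)),
        ih]
  have hyt : ∀ i, K ≤ i → ∀ j, cfTerm (-1 / zIter ξ z (i + 1 + j)) j = cfTerm ξ i := by
    intro i hi j
    rw [cfTerm, hyg (i + 1) (by omega) j]
    exact floor_of_step (hy1 i hi) (hystep i hi)
  refine ⟨K, by omega, hterm, by simpa using hper 0, fun r => ⟨hy1 _ (by omega), fun j => ?_⟩⟩
  have hle : 1 + j ≤ s.length * (j + 1) := by nlinarith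
  obtain ⟨p, hp⟩ := Nat.exists_eq_add_of_le' hle
  rw [← hzper r (j + 1), hp, show K + r + (p + (1 + j)) = (K + (r + p)) + 1 + j by ring,
    hyt _ (by omega), hterm]
  apply sig_congr s (q := j + 1)
  have hp' : (s.length : ℤ) * (j + 1) = p + (1 + j) := by exact_mod_cast hp
  rw [hp']; push_cast; ring

/-- The length of the minimal period divides every other period length. -/
lemma length_dvd {ξ : ℝ} {s : List ℤ} (hp : IsCFPeriod s ξ) {N P : ℕ}
    (h : ∀ j, cfTerm ξ (N + j + P) = cfTerm ξ (N + j)) : s.length ∣ P := by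
  obtain ⟨hs, ⟨N', hN'⟩, hmin⟩ := hp
  have hL : 0 < s.length := List.length_pos_iff.mpr hs
  by_contra hnd
  have hpos : 1 ≤ P % s.length := by
    rw [Nat.one_le_iff_ne_zero]
    intro h0; exact hnd (Nat.dvd_of_mod_eq_zero h0)
  have hperL : ∀ T i, N' ≤ i → cfTerm ξ (i + s.length * T) = cfTerm ξ i := by
    intro T i hi
    obtain ⟨j, rfl⟩ := Nat.exists_eq_add_of_le hi
    rw [Nat.add_assoc, hN', hN', Nat.add_mul_mod_self_left]
  have := hmin (P % s.length) hpos ⟨N + N', hpos, fun j => by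
    have h1 := h (N' + j)
    rw [← hperL (P / s.length) _ (by omega)]
    rw [show N + N' + j + P % s.length + s.length * (P / s.length)
      = N + (N' + j) + (P % s.length + s.length * (P / s.length)) by ring, Nat.mod_add_div, h1,
      Nat.add_assoc]⟩
  have := Nat.mod_lt P hL
  omega

lemma odd_of_fix {ξ : ℝ} (hξ : Irrational ξ) {s : List ℤ} (hp : IsCFPeriod s ξ)
    (h : MRel ξ ξ (-1)) : Odd s.length := by
  obtain ⟨k, n, hkn, hpar⟩ := serret hξ (Or.inr rfl) h
  have hodd : Odd (k + n) := by
    by_contra hc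
    rw [Nat.not_odd_iff_even] at hc
    rw [hc.neg_one_pow] at hpar
    norm_num at hpar
  have key : ∀ k n : ℕ, k ≤ n → gaussIter ξ k = gaussIter ξ n → Odd (k + n) →
      Odd s.length := by
    intro k n hle hg ho
    obtain ⟨P, rfl⟩ := Nat.exists_eq_add_of_le hle
    have hd : s.length ∣ P := length_dvd hp (N := k) (fun j => by
      rw [show k + j + P = (k + P) + j by ring, cfTerm_add, cfTerm_add, hg])
    have : Odd P := by
      rcases Nat.even_or_odd P with h | h
      · exfalso
        rw [← Nat.not_even_iff_odd] at ho
        exact ho (by rw [← Nat.add_assoc]; exact Even.add ⟨k, rfl⟩ h)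
      · exact h
    exact Odd.of_dvd_nat this hd
  rcases le_total k n with hle | hle
  · exact key k n hle hkn hodd
  · exact key n k hle hkn.symm (by rwa [Nat.add_comm])

lemma fix_of_odd {S ξ z : ℝ} {D : ℤ} (hS : Irrational S) (hD : S ^ 2 = D) (h : CPair S ξ z)
    {s : List ℤ} (hp : IsCFPeriod s ξ) (ho : Odd s.length) : MRel ξ ξ (-1) := by
  obtain ⟨K, hK, -, hper, -⟩ := core hS hD h hp
  have h1 := mrel_gauss (h.irr hS) (K + s.length)
  have h2 := mrel_gauss (h.irr hS) K
  rw [hper] at h1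
  have h3 := h1.trans h2.symm
  rwa [← pow_add, Odd.neg_one_pow (by
    rw [show K + s.length + K = s.length + (K + K) by ring]
    exact ho.add_even (⟨K, rfl⟩ : Even (K + K)))] at h3

lemma mrel_neg_inv {z : ℝ} (hz : z ≠ 0) : MRel (-1 / z) z 1 :=
  ⟨0, -1, 1, 0, by norm_num, by push_cast; field_simp; ring⟩

lemma swap_of_pal {S ξ z : ℝ} {D : ℤ} (hS : Irrational S) (hD : S ^ 2 = D) (h : CPair S ξ z)
    {s : List ℤ} (hp : IsCFPeriod s ξ) (hpal : Palindromic s) : MRel z ξ 1 := by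
  obtain ⟨K, hK, hterm, -, hy⟩ := core hS hD h hp
  obtain ⟨r, hr⟩ := refl_of_pal s hp.1 hpal
  obtain ⟨hy1, hyt⟩ := hy r
  have hξ := h.irr hS
  have hzi := (cpair_iter hS hD h (K + r)).symm.irr hS
  have hyi : Irrational (-1 / zIter ξ z (K + r)) := by
    rw [neg_div, one_div]; exact hzi.inv.neg
  have heq : gaussIter ξ (K + r) = -1 / zIter ξ z (K + r) := by
    apply cf_unique' (irr_gauss hξ _) hyi _ hy1
    · intro j
      rw [hyt, ← cfTerm_add, Nat.add_assoc, hterm, ← hr]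
      push_cast; rfl
    · obtain ⟨K', hK'⟩ := Nat.exists_eq_add_of_le' hK
      rw [hK', show K' + 1 + r = K' + r + 1 by ring]
      exact gauss_gt_one hξ _
  have h1 := mrel_gauss hξ (K + r)
  rw [heq] at h1
  have h2 := (h1.trans (mrel_neg_inv hzi.ne_zero)).trans (mrel_z hS hD h (K + r)).symm
  have h3 := h2.symm
  rwa [mul_one, ← mul_pow, neg_one_mul, neg_neg, one_pow] at h3

lemma pal_of_swap {S ξ z : ℝ} {D : ℤ} (hS : Irrational S) (hD : S ^ 2 = D) (h : CPair S ξ z)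
    {s : List ℤ} (hp : IsCFPeriod s ξ) (ho : Odd s.length) {e : ℤ} (he : e = 1 ∨ e = -1)
    (hM : MRel z ξ e) : Palindromic s := by
  obtain ⟨K, hK, hterm, -, hy⟩ := core hS hD h hp
  obtain ⟨hy1, hyt⟩ := hy 0
  have hξ := h.irr hS
  have hzi := (cpair_iter hS hD h (K + 0)).symm.irr hS
  have h1 := (((mrel_neg_inv hzi.ne_zero).trans (mrel_z hS hD h (K + 0)).symm).trans hM).trans
    (mrel_gauss hξ K)
  have he' : 1 * (-1 : ℤ) ^ (K + 0) * e * (-1) ^ K = e := by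
    have : (-1 : ℤ) ^ K * (-1) ^ K = 1 := by rw [← mul_pow]; simp
    rw [add_zero]
    linear_combination e * this
  rw [he'] at h1
  obtain ⟨p, n, hpn, -⟩ := serret (irr_gauss hξ K) he h1
  have hrefl : ∀ j : ℕ, sig s (n + j) = sig s (-1 - p - j) := by
    intro j
    have h2 := hyt (p + j)
    rw [cfTerm_add, hpn, ← cfTerm_add, ← cfTerm_add, hterm] at h2
    push_cast at h2
    rw [h2]
    congr 1; ring
  apply pal_of_refl s ho (n - 1 - p)
  intro i
  have hL : 0 < s.length := List.length_pos_iff.mpr hp.1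
  have h0 : (s.length : ℤ) ≠ 0 := by omega
  have hnn := Int.emod_nonneg (i - n) h0
  have hdm := Int.mul_ediv_add_emod (i - n) s.length
  have h3 := hrefl ((i - n) % s.length).toNat
  rw [Int.toNat_of_nonneg hnn] at h3
  rw [sig_congr s (i := i) (j := n + (i - n) % s.length) (q := (i - n) / s.length)
    (by linarith), h3]
  apply sig_congr s (q := (i - n) / s.length)
  linarith

/-- The period `Γ(m,n,k)` is non palindromic and odd iff the class `C(m,n,k)` is
antisymmetric. -/
theorem statement7 (m n k : ℤ)
    (hpos : 0 < formDisc (m, n, k)) (hsq : ¬ IsSquare (formDisc (m, n, k))) :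
    ∀ s : List ℤ, IsCFPeriod s (xiPlus (m, n, k)) →
      ((¬ Palindromic s ∧ Odd s.length) ↔
        (SLEquiv (m, n, k) (antipF (m, n, k)) ∧ ¬ SLEquiv (m, n, k) (conjF (m, n, k)) ∧
          ¬ SLEquiv (m, n, k) (adjF (m, n, k)))) := by
  intro s hp
  have hm : m ≠ 0 := by
    rintro rfl
    exact hsq ⟨k, by simp [formDisc]; ring⟩
  have hmR : (m : ℝ) ≠ 0 := by exact_mod_cast hm
  set D := formDisc (m, n, k) with hDdef
  set S := Real.sqrt (D : ℝ) with hSdef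
  have hD : S ^ 2 = D := Real.sq_sqrt (by exact_mod_cast hpos.le)
  have hS : Irrational S := by
    rw [hSdef, irrational_sqrt_intCast_iff]
    exact ⟨hsq, hpos.le⟩
  have hDR : (D : ℝ) = k ^ 2 - 4 * m * n := by rw [hDdef]; simp [formDisc]
  have hx : xiPlus (m, n, k) = (-(k : ℝ) + S) / (2 * m) := rfl
  have hz : xiMinus (m, n, k) = (-(k : ℝ) - S) / (2 * m) := rfl
  set ξ := xiPlus (m, n, k)
  set z := xiMinus (m, n, k)
  have hC : CPair S ξ z := by
    have hmQ : (m : ℚ) ≠ 0 := by exact_mod_cast hm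
    refine ⟨-k / (2 * m), 1 / (2 * m), by positivity, ?_, ?_⟩
    · rw [hx]; push_cast; ring
    · rw [hz]; push_cast; ring
  have hξ := hC.irr hS
  have hsum : (m : ℝ) * (ξ + z) = -k := by rw [hx, hz]; field_simp; ring
  have hprod : (m : ℝ) * (ξ * z) = n := by
    rw [hx, hz]; field_simp; linear_combination (-1) * hD - hDR
  have hroot : (m : ℝ) * ξ ^ 2 + k * ξ + n = 0 := by
    linear_combination ξ * hsum - hprod
  have hanti := fix_iff (n := n) (k := k) hm hξ hroot (e := -1) (Or.inr rfl)
  have hconj := swap_iff (n := n) (k := k) hm hξ hsum hprod (e := -1) (Or.inr rfl)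
  have hadj := swap_iff (n := n) (k := k) hm hξ hsum hprod (e := 1) (Or.inl rfl)
  rw [neg_neg] at hconj
  rw [antip_iff, conj_iff_s7, adj_iff_s7, hanti, hconj, hadj]
  constructor
  · rintro ⟨hnp, ho⟩
    exact ⟨fix_of_odd hS hD hC hp ho, fun h => hnp (pal_of_swap hS hD hC hp ho (Or.inr rfl) h),
      fun h => hnp (pal_of_swap hS hD hC hp ho (Or.inl rfl) h)⟩
  · rintro ⟨h1, -, h3⟩
    exact ⟨fun hpal => h3 (swap_of_pal hS hD hC hp hpal), odd_of_fix hξ hp h1⟩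
end
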